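/- arXiv:1612.08690 — 3 statements merged into one kernel-verified Lean document; each statement's English description precedes it below -/
import Mathlib

section
/- Let g ≥ 1. Then the minimal integer n ≥ 1 such that (β² − 64)ⁿ lies in the ideal J_g of ℂ[α,β,γ] is exactly 2⌈g/2⌉ − 1. (Via Muñoz's presentation of the instanton Floer homology ring I(Σ_g × S¹)'_w, this is equivalent to: the endomorphism u² − 64 of I(Σ_g × S¹)_w has nilpotency degree 2⌈g/2⌉ − 1.) -/
open MvPolynomial

/-- ζ_k ∈ ℂ[α,β,γ] (variables: X 0 = α, X 1 = β, X 2 = γ), defined by ζ_0 = 1 and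
    ζ_{k+1} = α ζ_k + k²(β + (−1)^k 8) ζ_{k−1} + 2k(k−1) γ ζ_{k−2}, with ζ_k = 0 for k < 0. -/
noncomputable def zeta : ℕ → MvPolynomial (Fin 3) ℂ
  | 0 => 1
  | 1 => X 0
  | 2 => X 0 * zeta 1 + (X 1 - C 8) * zeta 0
  | (n + 3) =>
      X 0 * zeta (n + 2)
        + C (((n : ℂ) + 2) ^ 2) * (X 1 + C ((-1) ^ (n + 2) * 8)) * zeta (n + 1)
        + C (2 * ((n : ℂ) + 2) * ((n : ℂ) + 1)) * X 2 * zeta n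

/-- J_g = (ζ_g, ζ_{g+1}, ζ_{g+2}) ⊆ ℂ[α,β,γ]. -/
noncomputable def J (g : ℕ) : Ideal (MvPolynomial (Fin 3) ℂ) :=
  Ideal.span {zeta g, zeta (g + 1), zeta (g + 2)}

/-!
Write `u = β² - 64`. Induction on `r` through the recurrence shows that, modulo `J (r + 1)`, the
power `u ^ r` is a multiple of `γ ^ r`, whose coefficient is a weighted count of nonnegative lattice
paths of length `r` from `0` to `0`: the even-indexed `ζ` are the heights, and the recurrence lets
`u` move up or down by one. This coefficient vanishes for `r` odd, and is positive for `r` even.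

On the other hand `γ ^ r ∉ J (r + 1)`. Indeed `J (g + 1) = (γ ζ_g, ζ_{g+1}, ζ_{g+2})`, and
`ζ_{g+1}`, `ζ_{g+2}` are relatively prime modulo `γ`, so `γ f ∈ J (g + 1)` forces `f ∈ J g`, whereas
`1 ∉ J 1`. Hence `u ^ r ∈ J (r + 1)` exactly when `r` is odd.
-/

section ThreeTermRecurrence

variable {S : Type*} [CommRing S] {a : ℕ → S} {p : ℕ → Polynomial S}

theorem monic_and_natDegree_eq_of_recurrence [Nontrivial S] (h0 : p 0 = 1) (h1 : p 1 = Polynomial.X)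
    (hrec : ∀ k, p (k + 2) = Polynomial.X * p (k + 1) + Polynomial.C (a k) * p k) (k : ℕ) :
    (p k).Monic ∧ (p k).natDegree = k := by
  induction k using Nat.twoStepInduction with
  | zero => simp [h0]
  | one => simp [h1, Polynomial.monic_X]
  | more k ih ih' =>
    obtain ⟨hmonic, hdeg⟩ := ih'
    have hXmonic := Polynomial.monic_X.mul hmonic
    have hXdeg : (Polynomial.X * p (k + 1)).natDegree = k + 2 := by
      rw [Polynomial.natDegree_X_mul hmonic.ne_zero, hdeg]
    have hlt : (Polynomial.C (a k) * p k).degree < (Polynomial.X * p (k + 1)).degree := by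
      refine Polynomial.degree_lt_degree ?_
      have := Polynomial.natDegree_C_mul_le (a k) (p k)
      omega
    rw [hrec, Polynomial.natDegree_add_eq_left_of_degree_lt hlt]
    exact ⟨hXmonic.add_of_left hlt, hXdeg⟩

variable [IsDomain S]

theorem isRelPrime_C_of_monic {f : Polynomial S} (hf : f.Monic) {s : S} (hs : s ≠ 0) :
    IsRelPrime f (Polynomial.C s) := by
  intro d hdf hds
  have hdeg : d.natDegree = 0 := Nat.eq_zero_of_le_zero <| by
    simpa using Polynomial.natDegree_le_of_dvd hds (Polynomial.C_ne_zero.2 hs)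
  have hlead := hf.isUnit_leadingCoeff_of_dvd hdf
  rw [Polynomial.eq_C_of_natDegree_eq_zero hdeg, Polynomial.leadingCoeff_C] at hlead
  rw [Polynomial.eq_C_of_natDegree_eq_zero hdeg]
  exact hlead.map Polynomial.C

theorem isRelPrime_succ_of_recurrence [DecompositionMonoid (Polynomial S)] (h0 : p 0 = 1)
    (h1 : p 1 = Polynomial.X) (ha : ∀ k, a k ≠ 0)
    (hrec : ∀ k, p (k + 2) = Polynomial.X * p (k + 1) + Polynomial.C (a k) * p k) (k : ℕ) :
    IsRelPrime (p k) (p (k + 1)) := by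
  induction k with
  | zero => rw [h0]; exact isRelPrime_one_left
  | succ k ih =>
    have hmonic := (monic_and_natDegree_eq_of_recurrence h0 h1 hrec (k + 1)).1
    rw [hrec]
    exact ((isRelPrime_C_of_monic hmonic (ha k)).mul_right ih.symm).mul_add_right_right _

end ThreeTermRecurrence

theorem mem_span_of_mul_mem_span_of_isRelPrime {R S : Type*} [CommRing R] [CommRing S] [IsDomain S]
    [DecompositionMonoid S] {φ : R →+* S} (hφ : Function.Surjective φ) {c : R}
    (hc : IsLeftRegular c) (hker : RingHom.ker φ = Ideal.span {c}) {f p q r : R} (hp : φ p ≠ 0)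
    (hpq : IsRelPrime (φ p) (φ q)) (h : c * f ∈ Ideal.span {c * r, p, q}) :
    f ∈ Ideal.span {r, p, q} := by
  obtain ⟨A, B, D, hf⟩ := Submodule.mem_span_triple.1 h
  simp only [smul_eq_mul] at hf
  have hφc : φ c = 0 := by
    rw [← RingHom.mem_ker, hker]; exact Ideal.mem_span_singleton_self c
  have hsyz : φ B * φ p + φ D * φ q = 0 := by
    simpa [hφc] using congrArg φ hf
  obtain ⟨t', ht'⟩ : φ p ∣ φ D :=
    hpq.dvd_of_dvd_mul_left ⟨-φ B, by linear_combination hsyz⟩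
  obtain ⟨t, rfl⟩ := hφ t'
  have hB : φ B = -(φ t * φ q) :=
    mul_right_cancel₀ hp (by linear_combination hsyz - φ q * ht')
  have dvd_of_map_eq_zero {x : R} (hx : φ x = 0) : c ∣ x := by
    rwa [← Ideal.mem_span_singleton, ← hker]
  obtain ⟨v, hv⟩ := dvd_of_map_eq_zero (x := B + t * q) (by simp [hB])
  obtain ⟨w, hw⟩ := dvd_of_map_eq_zero (x := D - t * p) (by simp [ht', mul_comm])
  refine Submodule.mem_span_triple.2 ⟨A, v, w, hc ?_⟩
  simp only [smul_eq_mul]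
  linear_combination hf - p * hv - q * hw

theorem isUnit_natCast {A : Type*} [Ring A] [Algebra ℚ A] {n : ℕ} (hn : n ≠ 0) :
    IsUnit (n : A) := by
  simpa using (IsUnit.mk0 (n : ℚ) (Nat.cast_ne_zero.2 hn)).map (algebraMap ℚ A)

local notation "R" => MvPolynomial (Fin 3) ℂ
local notation "α" => (X 0 : MvPolynomial (Fin 3) ℂ)
local notation "β" => (X 1 : MvPolynomial (Fin 3) ℂ)
local notation "γ" => (X 2 : MvPolynomial (Fin 3) ℂ)

-- The natural subtractions truncate only where the coefficient in front of them vanishes.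
theorem zeta_succ (k : ℕ) :
    zeta (k + 1) = α * zeta k + k ^ 2 * (β + (-1) ^ k * 8) * zeta (k - 1)
      + 2 * k * (k - 1) * γ * zeta (k - 2) := by
  have hC8 : (C 8 : R) = 8 := map_ofNat C 8
  have hC2 : (C 2 : R) = 2 := map_ofNat C 2
  match k with
  | 0 => simp [zeta]
  | 1 =>
    simp only [zeta, hC8, Nat.sub_self, Nat.cast_one]
    ring
  | n + 2 =>
    rw [zeta]
    simp only [map_mul, map_pow, map_add, map_neg, map_one, map_natCast, hC8, hC2, Nat.cast_add,
      Nat.cast_ofNat, Nat.add_sub_cancel, show n + 2 - 1 = n + 1 from rfl]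
    ring

theorem zeta_two_mul_add_two (m : ℕ) :
    zeta (2 * m + 2) = α * zeta (2 * m + 1) + (2 * m + 1) ^ 2 * (β - 8) * zeta (2 * m)
      + 2 * (2 * m + 1) * (2 * m) * γ * zeta (2 * m - 1) := by
  have h := zeta_succ (2 * m + 1)
  rw [Odd.neg_one_pow ⟨m, rfl⟩, show 2 * m + 1 - 2 = 2 * m - 1 by omega, Nat.add_sub_cancel] at h
  push_cast at h
  linear_combination h

theorem zeta_two_mul_add_three (m : ℕ) :
    zeta (2 * m + 3) = α * zeta (2 * m + 2) + (2 * m + 2) ^ 2 * (β + 8) * zeta (2 * m + 1)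
      + 2 * (2 * m + 2) * (2 * m + 1) * γ * zeta (2 * m) := by
  have h := zeta_succ (2 * m + 2)
  rw [Even.neg_one_pow ⟨m + 1, by ring⟩, Nat.add_sub_cancel,
    show 2 * m + 2 - 1 = 2 * m + 1 from rfl] at h
  push_cast at h
  linear_combination h

theorem J_succ_eq_span (g : ℕ) :
    J (g + 1) = Ideal.span {γ * zeta g, zeta (g + 1), zeta (g + 2)} := by
  have hrec := zeta_succ (g + 2)
  push_cast at hrec
  have hunit : IsUnit (2 * (g + 2) * (g + 1) : R) := by
    exact_mod_cast isUnit_natCast (n := 2 * (g + 2) * (g + 1)) (by positivity)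
  apply le_antisymm <;> rw [J, Ideal.span_le] <;> rintro _ (rfl | rfl | rfl)
  · exact Ideal.subset_span (by simp)
  · exact Ideal.subset_span (by simp)
  · refine Submodule.mem_span_triple.2
      ⟨2 * (g + 2) * (g + 1), (g + 2) ^ 2 * (β + (-1) ^ (g + 2) * 8), α, ?_⟩
    simp only [smul_eq_mul]
    linear_combination -hrec
  · refine (Ideal.unit_mul_mem_iff_mem _ hunit).1 (Submodule.mem_span_triple.2
      ⟨-((g + 2) ^ 2 * (β + (-1) ^ (g + 2) * 8)), -α, 1, ?_⟩)
    simp only [smul_eq_mul]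
    linear_combination hrec
  · exact Ideal.subset_span (by simp)
  · exact Ideal.subset_span (by simp)

theorem J_antitone : Antitone J := by
  refine antitone_nat_of_succ_le fun g => ?_
  rw [J_succ_eq_span, Ideal.span_le]
  rintro _ (rfl | rfl | rfl)
  · exact Ideal.mul_mem_left _ _ (Ideal.subset_span (by simp))
  · exact Ideal.subset_span (by simp)
  · exact Ideal.subset_span (by simp)

theorem zeta_mem_J {g k : ℕ} (hgk : g ≤ k) : zeta k ∈ J g :=
  J_antitone hgk (Ideal.subset_span (by simp))

theorem X_two_pow_mul_mem_J {g : ℕ} {f : R} (hf : f ∈ J g) (n : ℕ) : γ ^ n * f ∈ J (g + n) := by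
  induction n with
  | zero => simpa using hf
  | succ n ih =>
    obtain ⟨a, b, c, h⟩ := Submodule.mem_span_triple.1 ih
    rw [← add_assoc, J_succ_eq_span, pow_succ', mul_assoc, ← h]
    refine Submodule.mem_span_triple.2 ⟨a, γ * b, γ * c, ?_⟩
    simp only [smul_eq_mul]
    ring

theorem X_zero_mem_J_one : α ∈ J 1 := by
  simpa [zeta] using zeta_mem_J (le_refl 1)

theorem X_one_sub_eight_mem_J_one : β - 8 ∈ J 1 := by
  have h := zeta_two_mul_add_two 0
  simp only [mul_zero, zero_add, Nat.cast_zero, zero_mul, add_zero, one_pow, one_mul] at h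
  have : β - 8 = zeta 2 - α * zeta 1 := by rw [h, zeta]; ring
  rw [this]
  exact sub_mem (zeta_mem_J one_le_two) (Ideal.mul_mem_left _ _ (zeta_mem_J le_rfl))

-- All three generators vanish at `(α, β, γ) = (0, 8, 0)`.
theorem one_notMem_J_one : (1 : R) ∉ J 1 := by
  have hJ : J 1 ≤ RingHom.ker (aeval ![0, 8, 0] : R →ₐ[ℂ] ℂ) := by
    rw [J, Ideal.span_le]
    rintro _ (rfl | rfl | rfl) <;> simp [zeta]
  intro h
  simpa using hJ h

/-- Reduction modulo `γ`, with values in `ℂ[β][α]`, so that the reductions of the `ζ_k` are monic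
univariate polynomials in `α`. -/
noncomputable def modGamma : R →ₐ[ℂ] Polynomial (Polynomial ℂ) :=
  aeval ![Polynomial.X, Polynomial.C Polynomial.X, 0]

theorem modGamma_aevalAeval (f : Polynomial (Polynomial ℂ)) :
    modGamma (Polynomial.aevalAeval β α f) = f := by
  have : modGamma.comp (Polynomial.aevalAeval β α) = AlgHom.id ℂ _ := by
    ext <;> simp [modGamma]
  exact DFunLike.congr_fun this f

theorem ker_modGamma :
    RingHom.ker (modGamma : R →+* Polynomial (Polynomial ℂ)) = Ideal.span {γ} := by
  apply le_antisymm
  · intro f hf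
    let mk := Ideal.Quotient.mkₐ ℂ (Ideal.span {γ})
    have hγ : mk γ = 0 := Ideal.Quotient.eq_zero_iff_mem.2 (Ideal.mem_span_singleton_self _)
    have hmk : (mk.comp (Polynomial.aevalAeval β α)).comp modGamma = mk := by
      refine algHom_ext fun i => ?_
      fin_cases i
      · simp [modGamma]
      · simp [modGamma]
      · simp [modGamma, hγ]
    have hf0 : modGamma f = 0 := hf
    have hmkf : mk f = 0 := by simpa [hf0] using (DFunLike.congr_fun hmk f).symm
    exact Ideal.Quotient.eq_zero_iff_mem.1 hmkf
  · rw [Ideal.span_singleton_le_iff_mem]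
    simp [RingHom.mem_ker, modGamma]

theorem modGamma_zeta_add_two (k : ℕ) :
    modGamma (zeta (k + 2)) = Polynomial.X * modGamma (zeta (k + 1))
      + Polynomial.C (((k : Polynomial ℂ) + 1) ^ 2 * (Polynomial.X - (-1) ^ k * 8))
        * modGamma (zeta k) := by
  have hα : modGamma α = Polynomial.X := by simp [modGamma]
  have hβ : modGamma β = Polynomial.C Polynomial.X := by simp [modGamma]
  have hγ : modGamma γ = 0 := by simp [modGamma]
  rw [zeta_succ (k + 1), Nat.add_sub_cancel]
  simp only [map_add, map_sub, map_mul, map_pow, map_neg, map_one, map_natCast, map_ofNat, hα, hβ,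
    hγ]
  push_cast
  ring

theorem succ_sq_mul_X_sub_ne_zero (k : ℕ) :
    ((k : Polynomial ℂ) + 1) ^ 2 * (Polynomial.X - (-1) ^ k * 8) ≠ 0 := by
  refine mul_ne_zero (pow_ne_zero _ (by exact_mod_cast k.succ_ne_zero)) ?_
  simpa [map_ofNat] using Polynomial.X_sub_C_ne_zero ((-1) ^ k * 8 : ℂ)

theorem mem_J_of_X_two_mul_mem_J_succ {g : ℕ} {f : R} (h : γ * f ∈ J (g + 1)) : f ∈ J g := by
  have hzero : modGamma (zeta 0) = 1 := by simp [zeta]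
  have hone : modGamma (zeta 1) = Polynomial.X := by simp [zeta, modGamma]
  have hmonic := (monic_and_natDegree_eq_of_recurrence (p := fun k => modGamma (zeta k)) hzero hone
    modGamma_zeta_add_two (g + 1)).1
  have hrel := isRelPrime_succ_of_recurrence (p := fun k => modGamma (zeta k)) hzero hone
    succ_sq_mul_X_sub_ne_zero modGamma_zeta_add_two (g + 1)
  rw [J_succ_eq_span] at h
  exact mem_span_of_mul_mem_span_of_isRelPrime (φ := (modGamma : R →+* _))
    (fun f => ⟨_, modGamma_aevalAeval f⟩) (IsLeftCancelMulZero.mul_left_cancel_of_ne_zero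
      (X_ne_zero 2)) ker_modGamma hmonic.ne_zero hrel h

theorem X_two_pow_notMem_J_succ (n : ℕ) : γ ^ n ∉ J (n + 1) := by
  induction n with
  | zero => simpa using one_notMem_J_one
  | succ n ih =>
    rw [pow_succ']
    exact mt mem_J_of_X_two_mul_mem_J_succ ih

/-- The weighted number of lattice paths with `r` steps `±1` from height `i` to height `0` that stay
nonnegative, where a step up from height `i` weighs `16 / (2i + 1)²` and a step down from height `i`
weighs `4 (2i - 1) / (2i + 1)`. These are the coefficients with which `(β² - 64) ^ r * ζ_{2i}`
reduces to a multiple of `γ ^ (r + i)`. -/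
def pathWeight : ℕ → ℕ → ℚ≥0
  | 0, 0 => 1
  | 0, _ + 1 => 0
  | r + 1, 0 => 16 * pathWeight r 1
  | r + 1, i + 1 => 16 / (2 * i + 3) ^ 2 * pathWeight r (i + 2)
      + 4 * (2 * i + 1) / (2 * i + 3) * pathWeight r i

theorem sq_mul_pathWeight_succ_succ (r i : ℕ) :
    (2 * i + 3) ^ 2 * pathWeight (r + 1) (i + 1)
      = 16 * pathWeight r (i + 2) + 4 * (2 * i + 3) * (2 * i + 1) * pathWeight r i := by
  rw [pathWeight]
  field_simp

theorem pathWeight_eq_zero {r i : ℕ} (h : Odd (r + i)) : pathWeight r i = 0 := by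
  induction r generalizing i with
  | zero =>
    cases i with
    | zero => simp at h
    | succ i => rw [pathWeight]
  | succ r ih =>
    cases i with
    | zero => rw [pathWeight, ih h, mul_zero]
    | succ i =>
      have hup : Odd (r + (i + 2)) := by grind
      have hdown : Odd (r + i) := by grind
      rw [pathWeight, ih hup, ih hdown, mul_zero, mul_zero, add_zero]

theorem pathWeight_pos {r i : ℕ} (hir : i ≤ r) (h : Even (r + i)) : 0 < pathWeight r i := by
  induction r generalizing i with
  | zero => simp [Nat.le_zero.1 hir, pathWeight]
  | succ r ih =>
    cases i with
    | zero =>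
      have hr : r ≠ 0 := by rintro rfl; simp at h
      rw [pathWeight]
      have := ih (i := 1) (by omega) h
      positivity
    | succ i =>
      have := ih (i := i) (by omega) (by grind)
      rw [pathWeight]
      positivity

/-- The inductive statement: modulo `J (r + i + 1)`, multiplication by `(β² - 64) ^ r` sends
`ζ_{2i}` to a scalar multiple of `γ ^ (r + i)` and annihilates `ζ_{2i+1}`. -/
structure ReducesToGammaPow (r : ℕ) : Prop where
  even (i : ℕ) :
    (β ^ 2 - 64) ^ r * zeta (2 * i) - C (pathWeight r i : ℂ) * γ ^ (r + i) ∈ J (r + i + 1)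
  odd (i : ℕ) : (β ^ 2 - 64) ^ r * zeta (2 * i + 1) ∈ J (r + i + 1)

namespace ReducesToGammaPow

variable {r : ℕ}

theorem zero : ReducesToGammaPow 0 where
  even i := by
    cases i with
    | zero => simp [zeta, pathWeight]
    | succ i => simpa [pathWeight] using zeta_mem_J (by omega)
  odd i := by simpa using zeta_mem_J (by omega)

theorem mul_even_mem (h : ReducesToGammaPow r) {a : R} (ha : a ∈ J 1) (i : ℕ) :
    a * ((β ^ 2 - 64) ^ r * zeta (2 * i)) ∈ J (r + i + 1) := by
  have hγ : γ ^ (r + i) * a ∈ J (r + i + 1) := by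
    simpa only [add_comm 1] using X_two_pow_mul_mem_J ha (r + i)
  convert add_mem (Ideal.mul_mem_left _ a (h.even i))
    (Ideal.mul_mem_left _ (C (pathWeight r i : ℂ)) hγ) using 1
  ring

theorem odd_add_even_mem (h : ReducesToGammaPow r) (i : ℕ) :
    (β ^ 2 - 64) ^ r * ((i + 1) * (β + 8) * zeta (2 * i + 1) + (2 * i + 1) * γ * zeta (2 * i))
      ∈ J (r + i + 2) := by
  have hunit : IsUnit (4 * (i + 1) : R) := by
    exact_mod_cast isUnit_natCast (A := R) (n := 4 * (i + 1)) (by positivity)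
  rw [← Ideal.unit_mul_mem_iff_mem _ hunit, show r + i + 2 = r + (i + 1) + 1 by ring]
  convert sub_mem (h.odd (i + 1)) (h.mul_even_mem X_zero_mem_J_one (i + 1)) using 1
  rw [show 2 * (i + 1) + 1 = 2 * i + 3 by ring, zeta_two_mul_add_three,
    show 2 * (i + 1) = 2 * i + 2 by ring]
  ring

theorem X_two_mul_mul_even_mem (h : ReducesToGammaPow r) {a : R} (ha : a ∈ J 1) (i : ℕ) :
    γ * (a * ((β ^ 2 - 64) ^ r * zeta (2 * i))) ∈ J (r + i + 2) := by
  simpa using X_two_pow_mul_mem_J (h.mul_even_mem ha i) 1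

theorem succ_odd (h : ReducesToGammaPow r) (i : ℕ) :
    (β ^ 2 - 64) ^ (r + 1) * zeta (2 * i + 1) ∈ J (r + 1 + i + 1) := by
  have hunit : IsUnit (i + 1 : R) := by
    exact_mod_cast isUnit_natCast (A := R) i.succ_ne_zero
  rw [← Ideal.unit_mul_mem_iff_mem _ hunit, show r + 1 + i + 1 = r + i + 2 by ring]
  convert sub_mem (Ideal.mul_mem_left _ (β - 8) (h.odd_add_even_mem i))
    (Ideal.mul_mem_left _ (2 * (i : R) + 1)
      (h.X_two_mul_mul_even_mem X_one_sub_eight_mem_J_one i)) using 1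
  ring

-- The recurrence gives `(2i + 1)² (β - 8) ζ_{2i}`; of the remaining factor `β + 8 = 16 + (β - 8)`
-- only the value `16` at the point `(0, 8, 0)` contributes.
theorem succ_even_mem (h : ReducesToGammaPow r) (i : ℕ) :
    (2 * i + 1) ^ 2 * ((β ^ 2 - 64) ^ (r + 1) * zeta (2 * i))
      - 16 * ((β ^ 2 - 64) ^ r * zeta (2 * (i + 1)))
      + 4 * (2 * i + 1) * i * γ * ((β ^ 2 - 64) ^ r * ((β + 8) * zeta (2 * i - 1)))
      ∈ J (r + i + 2) := by
  have hunit : IsUnit (i + 1 : R) := by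
    exact_mod_cast isUnit_natCast (A := R) i.succ_ne_zero
  have hlead := Ideal.mul_mem_left _ α (h.odd_add_even_mem i)
  have hγ := Ideal.mul_mem_left _ (2 * (i : R) + 1) (h.X_two_mul_mul_even_mem X_zero_mem_J_one i)
  have hβ := Ideal.mul_mem_left _ ((i : R) + 1) (h.mul_even_mem X_one_sub_eight_mem_J_one (i + 1))
  rw [← Ideal.unit_mul_mem_iff_mem _ hunit]
  convert add_mem (sub_mem hγ hlead) hβ using 1
  rw [show 2 * (i + 1) = 2 * i + 2 by ring]
  linear_combination (i + 1) * (β ^ 2 - 64) ^ r * (β + 8) * -(zeta_two_mul_add_two i)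

theorem succ_even_zero (h : ReducesToGammaPow r) :
    (β ^ 2 - 64) ^ (r + 1) * zeta (2 * 0) - C (pathWeight (r + 1) 0 : ℂ) * γ ^ (r + 1 + 0)
      ∈ J (r + 1 + 0 + 1) := by
  have hC16 : (C 16 : R) = 16 := map_ofNat C 16
  convert add_mem (h.succ_even_mem 0) (Ideal.mul_mem_left _ 16 (h.even 1)) using 1
  rw [pathWeight]
  push_cast
  rw [C_mul, hC16]
  ring

theorem succ_even_succ (h : ReducesToGammaPow r) (i : ℕ) :
    (β ^ 2 - 64) ^ (r + 1) * zeta (2 * (i + 1))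
      - C (pathWeight (r + 1) (i + 1) : ℂ) * γ ^ (r + 1 + (i + 1)) ∈ J (r + 1 + (i + 1) + 1) := by
  have hunit : IsUnit ((2 * i + 3) ^ 2 : R) := by
    exact_mod_cast isUnit_natCast (A := R) (n := (2 * i + 3) ^ 2) (by positivity)
  have hweight : (2 * i + 3) ^ 2 * (C (pathWeight (r + 1) (i + 1) : ℂ) : R)
      = 16 * (C (pathWeight r (i + 2) : ℂ) : R)
        + 4 * (2 * i + 3) * (2 * i + 1) * (C (pathWeight r i : ℂ) : R) := by
    have h := congrArg (fun w : ℚ≥0 => (C (w : ℂ) : R)) (sq_mul_pathWeight_succ_succ r i)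
    push_cast at h
    simpa only [map_add, map_mul, map_pow, map_natCast, map_ofNat, map_one] using h
  have hup := Ideal.mul_mem_left _ 16 (h.even (i + 2))
  have hdown := Ideal.mul_mem_left _ (4 * (2 * (i : R) + 3) * (2 * i + 1))
    (X_two_pow_mul_mem_J (h.even i) 2)
  have hodd := Ideal.mul_mem_left _ (4 * (2 * (i : R) + 3))
    (X_two_pow_mul_mem_J (h.odd_add_even_mem i) 1)
  have hstep := h.succ_even_mem (i + 1)
  rw [show 2 * (i + 1) - 1 = 2 * i + 1 by omega] at hstep
  rw [← Ideal.unit_mul_mem_iff_mem _ hunit, show r + 1 + (i + 1) + 1 = r + (i + 1) + 2 by ring]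
  convert sub_mem (add_mem (add_mem hstep hup) hdown) hodd using 1
  push_cast
  linear_combination -(γ ^ (r + i + 2)) * hweight

end ReducesToGammaPow

theorem reducesToGammaPow (r : ℕ) : ReducesToGammaPow r := by
  induction r with
  | zero => exact .zero
  | succ r ih =>
    refine ⟨fun i => ?_, ih.succ_odd⟩
    cases i with
    | zero => exact ih.succ_even_zero
    | succ i => exact ih.succ_even_succ i

theorem pow_mem_J_succ_iff_odd (r : ℕ) : (β ^ 2 - 64) ^ r ∈ J (r + 1) ↔ Odd r := by
  have h : (β ^ 2 - 64) ^ r - C (pathWeight r 0 : ℂ) * γ ^ r ∈ J (r + 1) := by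
    simpa [zeta] using (reducesToGammaPow r).even 0
  rcases r.even_or_odd with hr | hr
  · have hunit : IsUnit (C (pathWeight r 0 : ℂ) : R) := by
      refine (IsUnit.mk0 _ ?_).map C
      exact_mod_cast (pathWeight_pos r.zero_le hr).ne'
    refine iff_of_false (fun hmem => X_two_pow_notMem_J_succ r ?_) (Nat.not_odd_iff_even.2 hr)
    rw [← Ideal.unit_mul_mem_iff_mem _ hunit]
    simpa using sub_mem hmem h
  · refine iff_of_true ?_ hr
    simpa [pathWeight_eq_zero (i := 0) hr] using h

/-- The minimal n ≥ 1 with (β² − 64)ⁿ ∈ J_g is exactly 2⌈g/2⌉ − 1. -/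
theorem nilpotency_degree (g : ℕ) (hg : 1 ≤ g) :
    IsLeast {n : ℕ | 1 ≤ n ∧ (X 1 ^ 2 - 64) ^ n ∈ J g} (2 * ((g + 1) / 2) - 1) := by
  obtain ⟨G, hG⟩ : ∃ G, (g + 1) / 2 = G + 1 := ⟨(g + 1) / 2 - 1, by omega⟩
  rw [hG, show 2 * (G + 1) - 1 = 2 * G + 1 by omega]
  refine ⟨⟨by omega, ?_⟩, fun n ⟨_, hn⟩ => ?_⟩
  · exact J_antitone (by omega) ((pow_mem_J_succ_iff_odd (2 * G + 1)).2 ⟨G, rfl⟩)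
  · by_contra! hlt
    have hmem : (X 1 ^ 2 - 64) ^ (2 * G) ∈ J (2 * G + 1) :=
      Ideal.pow_mem_of_pow_mem _ (J_antitone (by omega) hn) (by omega)
    exact Nat.not_odd_iff_even.2 (even_two_mul G) ((pow_mem_J_succ_iff_odd _).1 hmem)
end

section
/- For every g ≥ 0, the quotient ring ℂ[α,γ]/J_g^- is a finite-dimensional ℂ-vector space of dimension ⌊g/2⌋·(⌊g/2⌋ + 1); in particular dim ℂ[α,γ]/J_g^- = g(g+2)/4 when g is even, and J_g^- and J_{g−1}^- have equal codimension when g is odd. -/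
open MvPolynomial

/-- ζ_k^- ∈ ℂ[α,γ] (variables: X 0 = α, X 1 = γ):
    ζ_{k+1}^- = α ζ_k^- + 2k(k−1) γ ζ_{k−2}^- for k even, and
    ζ_{k+1}^- = α ζ_k^- − 16k² ζ_{k−1}^- + 2k(k−1) γ ζ_{k−2}^- for k odd. -/
noncomputable def zm : ℕ → MvPolynomial (Fin 2) ℂ
  | 0 => 1
  | 1 => X 0
  | 2 => X 0 * zm 1 - C 16 * zm 0
  | (n + 3) =>
      if n % 2 = 0 then
        X 0 * zm (n + 2) + C (2 * ((n : ℂ) + 2) * ((n : ℂ) + 1)) * X 1 * zm n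
      else
        X 0 * zm (n + 2) - C (16 * ((n : ℂ) + 2) ^ 2) * zm (n + 1)
          + C (2 * ((n : ℂ) + 2) * ((n : ℂ) + 1)) * X 1 * zm n

/-- ζ_k^- for an integer index k, with ζ_k^- = 0 for k < 0. -/
noncomputable def zmZ (k : ℤ) : MvPolynomial (Fin 2) ℂ :=
  if k < 0 then 0 else zm k.toNat

/-- J_g^- = (ζ_g^-, ζ_{g+1}^-, ζ_{g+2}^-) ⊆ ℂ[α,γ]. -/
noncomputable def Jm (g : ℕ) : Ideal (MvPolynomial (Fin 2) ℂ) :=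
  Ideal.span {zm g, zm (g + 1), zm (g + 2)}

/-!
By induction `ζ_k` is monic of degree `k` in `α`, so the products `γ ^ c * ζ_k` form a basis of
`ℂ[α, γ]`. Give `γ ^ c * ζ_k` the weight `c + ⌊k / 2⌋`. The recurrence shows that multiplication
by `α` does not lower the weight, and, solved for `γ ζ_k`, that `γ J_{2i} ⊆ J_{2i+2}`; hence
`J_{2m}` is the span of the basis vectors of weight at least `m`, and its codimension is the number
`m (m + 1)` of pairs `(c, k)` of smaller weight.

It remains to see that `J_{2m+1} = J_{2m}`. Otherwise the transpose of `α` on `J_{2m} / J_{2m+1}`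
has an eigenvector: a functional `l` on `J_{2m}` that vanishes on `J_{2m+1} ⊇ J_{2m+2}`, with
`l (α v) = μ l v`. Put `x_i = l (γ ^ (m-i) ζ_{2i})` and `y_i = l (γ ^ (m-i) ζ_{2i+1})` for `i ≤ m`.
If `x_j` is the first nonzero `x_i`, then `μ = ±4(2j+1)`; up to the symmetry
`(μ, x_i, y_i) ↦ (-μ, (-1)^i x_i, (-1)^(i+1) y_i)` we have `μ > 0`. Normalized to `x_j = 1`, the
`x_i` and `y_i` then remain positive for `i ≥ j`, because `(4(2i+1))² > μ²` for `i > j`. This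
contradicts `y_m = l (ζ_{2m+1}) = 0`, so all `x_i` and `y_i` vanish and `l = 0`.
-/

section Basis

variable {K V ι : Type*} [Ring K] [AddCommGroup V] [Module K V] (b : Module.Basis ι K V)
  (s : Set ι)

/-- The span of the basis vectors outside `s`, as a model of the quotient by the span of those
in `s`. -/
noncomputable def quotientSpanImageEquiv :
    (V ⧸ Submodule.span K (b '' s)) ≃ₗ[K] Submodule.span K (b '' sᶜ) :=
  Submodule.quotientEquivOfIsCompl _ _
    (b.linearIndependent.isCompl_span_image b.span_eq isCompl_compl)

variable {s} in
lemma finite_quotient_span_image (hs : sᶜ.Finite) :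
    Module.Finite K (V ⧸ Submodule.span K (b '' s)) :=
  have := Module.Finite.span_of_finite K (hs.image b)
  Module.Finite.equiv (quotientSpanImageEquiv b s).symm

lemma finrank_quotient_span_image [StrongRankCondition K] :
    Module.finrank K (V ⧸ Submodule.span K (b '' s)) = sᶜ.ncard := by
  rw [(quotientSpanImageEquiv b s).finrank_eq, Set.ncard,
    ← toENat_rank_span_set (b.linearIndependent.linearIndepOn sᶜ)]
  rfl

end Basis

lemma finSuccEquiv_X_one {K : Type*} [CommSemiring K] :
    finSuccEquiv K 1 (X 1) = Polynomial.C (X 0) :=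
  finSuccEquiv_X_succ (j := 0)

section MonicBasis

variable {K : Type*} [CommRing K] [IsDomain K] {p : ℕ → MvPolynomial (Fin 2) K}

/-- Polynomials in two variables, the `k`-th of which is monic of degree `k` in `X 0`, yield the
basis `X 1 ^ c * p k` indexed by the pairs `(c, k)`. -/
noncomputable def monicBasis (hp : ∀ k, (finSuccEquiv K 1 (p k)).IsMonicOfDegree k) :
    Module.Basis (ℕ × ℕ) K (MvPolynomial (Fin 2) K) :=
  let sequence : Polynomial.Sequence (MvPolynomial (Fin 1) K) :=
    { elems' := fun k ↦ finSuccEquiv K 1 (p k)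
      degree_eq' := fun k ↦ by
        rw [Polynomial.degree_eq_natDegree (hp k).ne_zero, (hp k).natDegree_eq] }
  let basis : Module.Basis ℕ (MvPolynomial (Fin 1) K) (Polynomial (MvPolynomial (Fin 1) K)) :=
    sequence.basis fun k ↦ (hp k).monic.leadingCoeff ▸ isUnit_one
  (((basisMonomials (Fin 1) K).smulTower basis).map
    (finSuccEquiv K 1).toLinearEquiv.symm).reindex
      ((Finsupp.uniqueEquiv (0 : Fin 1)).prodCongr (Equiv.refl ℕ))

lemma monicBasis_apply (hp : ∀ k, (finSuccEquiv K 1 (p k)).IsMonicOfDegree k) (i : ℕ × ℕ) :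
    monicBasis hp i = X 1 ^ i.1 * p i.2 := by
  apply (finSuccEquiv K 1).injective
  rw [map_mul, map_pow, finSuccEquiv_X_one, ← Polynomial.C_pow, X_pow_eq_monomial]
  simp [monicBasis, Module.Basis.smulTower_apply, Polynomial.smul_eq_C_mul]

end MonicBasis

lemma mul_mem_of_forall_X_mul_mem {σ K : Type*} [CommSemiring K]
    {L : Submodule K (MvPolynomial σ K)} (hL : ∀ i, ∀ v ∈ L, X i * v ∈ L)
    (p : MvPolynomial σ K) {v : MvPolynomial σ K} (hv : v ∈ L) : p * v ∈ L := by
  induction p using MvPolynomial.induction_on generalizing v with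
  | C a => simpa only [C_mul'] using L.smul_mem a hv
  | add p q hp hq => simpa only [add_mul] using add_mem (hp hv) (hq hv)
  | mul_X p i hp => simpa only [mul_assoc] using hp (hL i v hv)

section EigenFunctional

variable {K V : Type*} [Field K] [IsAlgClosed K] [AddCommGroup V] [Module K V]

lemma exists_dual_eigenvector [FiniteDimensional K V] [Nontrivial V] (T : Module.End K V) :
    ∃ (μ : K) (l : Module.Dual K V), l ≠ 0 ∧ ∀ v, l (T v) = μ * l v := by
  obtain ⟨μ, hμ⟩ := Module.End.exists_eigenvalue T.dualMap
  obtain ⟨l, hl, hl_ne⟩ := hμ.exists_hasEigenvector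
  exact ⟨μ, l, hl_ne, LinearMap.congr_fun (Module.End.mem_eigenspace_iff.1 hl)⟩

lemma exists_eigenfunctional_of_lt {P Q : Submodule K V} (hPQ : P < Q)
    [FiniteDimensional K (V ⧸ P)] (T : Module.End K V) (hP : P ≤ P.comap T) (hQ : Q ≤ Q.comap T) :
    ∃ (μ : K) (l : Module.Dual K V),
      (∀ v ∈ P, l v = 0) ∧ (∃ v ∈ Q, l v ≠ 0) ∧ ∀ v ∈ Q, l (T v) = μ * l v := by
  let N : Submodule K (V ⧸ P) := Q.map P.mkQ
  have hN : ∀ n ∈ N, P.mapQ P T hP n ∈ N := by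
    rintro _ ⟨v, hv, rfl⟩
    exact ⟨T v, hQ hv, rfl⟩
  have : Nontrivial N := by
    obtain ⟨v, hvQ, hvP⟩ := SetLike.exists_of_lt hPQ
    refine N.nontrivial_iff_ne_bot.2 fun hbot ↦ hvP ?_
    simpa [N, hbot] using Submodule.mem_map_of_mem (f := P.mkQ) hvQ
  obtain ⟨μ, l, hl_ne, hl⟩ := exists_dual_eigenvector ((P.mapQ P T hP).restrict hN)
  obtain ⟨l', hl'⟩ := l.exists_extend
  have hl'_apply (v : V) (hv : v ∈ Q) : l' (P.mkQ v) = l ⟨P.mkQ v, v, hv, rfl⟩ := by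
    rw [← hl']; rfl
  refine ⟨μ, l' ∘ₗ P.mkQ, fun v hv ↦ ?_, ?_, fun v hv ↦ ?_⟩
  · simp [(Submodule.Quotient.mk_eq_zero P).2 hv]
  · contrapose! hl_ne
    ext ⟨_, v, hv, rfl⟩
    exact (hl'_apply v hv).symm.trans (hl_ne v hv)
  · rw [LinearMap.comp_apply, LinearMap.comp_apply, hl'_apply v hv, hl'_apply (T v) (hQ hv)]
    exact hl ⟨P.mkQ v, v, hv, rfl⟩

end EigenFunctional

/-- The equations satisfied by the values `x i = l (e i)`, `y i = l (f i)` of a functional with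
`l ∘ A = μ • l`, where `A` is the operator with
`A (e i) = f i - p (i - 1) • e (i - 1)` and `A (f i) = s i ^ 2 • e i - q (i - 1) • f (i - 1)`
on the space with basis `e 0, f 0, …, e m, f m`. -/
structure IsEigenRecurrence {K : Type*} [CommRing K] (s p q : ℕ → K) (m : ℕ) (μ : K)
    (x y : ℕ → K) : Prop where
  y_zero : y 0 = μ * x 0
  mul_y_zero : μ * y 0 = s 0 ^ 2 * x 0
  y_succ : ∀ i < m, y (i + 1) = μ * x (i + 1) + p i * x i
  mul_y_succ : ∀ i < m, μ * y (i + 1) = s (i + 1) ^ 2 * x (i + 1) - q i * y i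

namespace IsEigenRecurrence

section CommRing

variable {K : Type*} [CommRing K] {s p q : ℕ → K} {m : ℕ} {μ : K} {x y : ℕ → K}

lemma const_mul (h : IsEigenRecurrence s p q m μ x y) (a : K) :
    IsEigenRecurrence s p q m μ (fun i ↦ a * x i) (fun i ↦ a * y i) where
  y_zero := by linear_combination a * h.y_zero
  mul_y_zero := by linear_combination a * h.mul_y_zero
  y_succ i hi := by linear_combination a * h.y_succ i hi
  mul_y_succ i hi := by linear_combination a * h.mul_y_succ i hi

lemma neg (h : IsEigenRecurrence s p q m μ x y) :
    IsEigenRecurrence s p q m (-μ) (fun i ↦ (-1) ^ i * x i) (fun i ↦ (-1) ^ (i + 1) * y i) where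
  y_zero := by linear_combination -h.y_zero
  mul_y_zero := by linear_combination h.mul_y_zero
  y_succ i hi := by linear_combination (-1) ^ i * h.y_succ i hi
  mul_y_succ i hi := by linear_combination -(-1) ^ i * h.mul_y_succ i hi

lemma y_eq_zero_of_forall_le (h : IsEigenRecurrence s p q m μ x y) {i : ℕ} (hi : i ≤ m)
    (hx : ∀ k ≤ i, x k = 0) : y i = 0 := by
  cases i with
  | zero => rw [h.y_zero, hx 0 le_rfl, mul_zero]
  | succ i => rw [h.y_succ i hi, hx _ le_rfl, hx i i.le_succ, mul_zero, mul_zero, add_zero]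

lemma y_eq_mul_of_forall_lt (h : IsEigenRecurrence s p q m μ x y) {j : ℕ} (hj : j ≤ m)
    (hx : ∀ i < j, x i = 0) : y j = μ * x j := by
  cases j with
  | zero => exact h.y_zero
  | succ j => rw [h.y_succ j hj, hx j j.lt_succ_self, mul_zero, add_zero]

lemma mul_y_eq_of_forall_lt (h : IsEigenRecurrence s p q m μ x y) {j : ℕ} (hj : j ≤ m)
    (hx : ∀ i < j, x i = 0) : μ * y j = s j ^ 2 * x j := by
  cases j with
  | zero => exact h.mul_y_zero
  | succ j =>
    have hy : y j = 0 := h.y_eq_zero_of_forall_le (by omega) fun k hk ↦ hx k (by omega)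
    rw [h.mul_y_succ j hj, hy, mul_zero, sub_zero]

lemma eq_or_eq_neg [IsDomain K] (h : IsEigenRecurrence s p q m μ x y) {j : ℕ} (hj : j ≤ m)
    (hx : ∀ i < j, x i = 0) (hxj : x j ≠ 0) : μ = s j ∨ μ = -s j := by
  refine sq_eq_sq_iff_eq_or_eq_neg.1 (mul_right_cancel₀ hxj ?_)
  linear_combination h.mul_y_eq_of_forall_lt hj hx - μ * h.y_eq_mul_of_forall_lt hj hx

end CommRing

lemma pos_of_le {K : Type*} [CommRing K] [LinearOrder K] [IsStrictOrderedRing K] {s p q : ℕ → K}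
    (hs : StrictMono s) (hp : ∀ i, 0 ≤ p i) (hq : ∀ i, 0 < q i) {m j : ℕ} {x y : ℕ → K}
    (h : IsEigenRecurrence s p q m (s j) x y) (hsj : 0 < s j) (hx : 0 < x j) (hy : 0 < y j)
    {i : ℕ} (hji : j ≤ i) (him : i ≤ m) : 0 < x i ∧ 0 < y i := by
  induction i, hji using Nat.le_induction with
  | base => exact ⟨hx, hy⟩
  | succ i hji ih =>
    obtain ⟨hxi, hyi⟩ := ih (by omega)
    have hgap : 0 < s (i + 1) ^ 2 - s j ^ 2 :=
      sub_pos.2 (pow_lt_pow_left₀ (hs (by omega)) hsj.le two_ne_zero)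
    have hx_succ : (s (i + 1) ^ 2 - s j ^ 2) * x (i + 1) = s j * p i * x i + q i * y i := by
      linear_combination s j * h.y_succ i him - h.mul_y_succ i him
    have hpi := hp i
    have hqi := hq i
    have hxi' : 0 < x (i + 1) := (pos_iff_pos_of_mul_pos (hx_succ ▸ by positivity)).1 hgap
    exact ⟨hxi', h.y_succ i him ▸ by positivity⟩

section Complex

variable {s p q : ℕ → ℝ} {m : ℕ} {x y : ℕ → ℂ}

lemma re {μ : ℝ} (h : IsEigenRecurrence (fun i ↦ (s i : ℂ)) (fun i ↦ (p i : ℂ))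
      (fun i ↦ (q i : ℂ)) m μ x y) :
    IsEigenRecurrence s p q m μ (fun i ↦ (x i).re) (fun i ↦ (y i).re) where
  y_zero := by simpa using congrArg Complex.re h.y_zero
  mul_y_zero := by simpa [← Complex.ofReal_pow] using congrArg Complex.re h.mul_y_zero
  y_succ i hi := by simpa using congrArg Complex.re (h.y_succ i hi)
  mul_y_succ i hi := by
    simpa [← Complex.ofReal_pow] using congrArg Complex.re (h.mul_y_succ i hi)

lemma y_last_ne_zero (hs : StrictMono s) (hs_pos : ∀ i, 0 < s i) (hp : ∀ i, 0 ≤ p i)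
    (hq : ∀ i, 0 < q i) {j : ℕ} (h : IsEigenRecurrence (fun i ↦ (s i : ℂ)) (fun i ↦ (p i : ℂ))
      (fun i ↦ (q i : ℂ)) m (s j) x y)
    (hj : j ≤ m) (hx : ∀ i < j, x i = 0) (hxj : x j ≠ 0) : y m ≠ 0 := by
  intro hym
  -- Normalized to `x j = 1`, the real parts satisfy the same recurrence and stay positive.
  have hre := (h.const_mul (x j)⁻¹).re
  have hx_pos : 0 < ((x j)⁻¹ * x j).re := by simp [hxj]
  have hy_pos : 0 < ((x j)⁻¹ * y j).re := by
    rw [h.y_eq_mul_of_forall_lt hj hx, mul_left_comm, inv_mul_cancel₀ hxj]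
    simpa using hs_pos j
  have := (pos_of_le hs hp hq hre (hs_pos j) hx_pos hy_pos hj le_rfl).2
  simp [hym] at this

lemma x_eq_zero_of_y_last_eq_zero (hs : StrictMono s) (hs_pos : ∀ i, 0 < s i) (hp : ∀ i, 0 ≤ p i)
    (hq : ∀ i, 0 < q i) {μ : ℂ} (h : IsEigenRecurrence (fun i ↦ (s i : ℂ)) (fun i ↦ (p i : ℂ))
      (fun i ↦ (q i : ℂ)) m μ x y)
    (hym : y m = 0) {i : ℕ} (hi : i ≤ m) : x i = 0 := by
  induction i using Nat.strong_induction_on with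
  | _ j ih =>
    by_contra hxj
    have hx : ∀ i < j, x i = 0 := fun i hij ↦ ih i hij (by omega)
    rcases h.eq_or_eq_neg hi hx hxj with rfl | rfl
    · exact y_last_ne_zero hs hs_pos hp hq h hi hx hxj hym
    · have hneg := h.neg
      rw [neg_neg] at hneg
      exact y_last_ne_zero hs hs_pos hp hq hneg hi (fun i hij ↦ by simp [hx i hij])
        (by simpa using hxj) (by simp [hym])

end Complex

end IsEigenRecurrence

/-- The coefficient of `-ζ_{k-1}` in the recurrence for `ζ_{k+1}`. -/
def predCoeff (k : ℕ) : ℕ := if Even k then 0 else 16 * k ^ 2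

/-- The coefficient of `γ ζ_{k-2}` in the recurrence for `ζ_{k+1}`. -/
def gammaCoeff (k : ℕ) : ℕ := 2 * k * (k - 1)

lemma predCoeff_of_even {k : ℕ} (hk : Even k) : predCoeff k = 0 := if_pos hk

lemma predCoeff_two_mul_add_one (i : ℕ) : predCoeff (2 * i + 1) = (4 * (2 * i + 1)) ^ 2 := by
  rw [predCoeff, if_neg (by simp)]
  ring

lemma gammaCoeff_pos {k : ℕ} (hk : 2 ≤ k) : 0 < gammaCoeff k :=
  Nat.mul_pos (by omega) (by omega)

-- At `k = 0` and `k = 1` the truncated indices `k - 1` and `k - 2` carry the coefficient `0`.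
lemma zm_succ (k : ℕ) : zm (k + 1) =
    X 0 * zm k - predCoeff k • zm (k - 1) + gammaCoeff k • (X 1 * zm (k - 2)) := by
  match k with
  | 0 => simp [zm, predCoeff, gammaCoeff]
  | 1 => simp [zm, predCoeff, gammaCoeff, map_ofNat C]
  | n + 2 =>
    have hn : Even (n + 2) ↔ n % 2 = 0 := by rw [Nat.even_iff]; omega
    simp only [zm, predCoeff, gammaCoeff, hn, Nat.add_sub_cancel]
    split_ifs <;>
      simp only [map_mul, map_add, map_pow, map_natCast, map_one, map_ofNat, nsmul_eq_mul] <;>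
      push_cast <;> ring

lemma X_zero_mul_X_one_pow_mul_zm (c k : ℕ) : X 0 * (X 1 ^ c * zm k) =
    X 1 ^ c * zm (k + 1) + predCoeff k • (X 1 ^ c * zm (k - 1)) -
      gammaCoeff k • (X 1 ^ (c + 1) * zm (k - 2)) := by
  rw [zm_succ]
  ring

lemma isMonicOfDegree_finSuccEquiv_zm (k : ℕ) : (finSuccEquiv ℂ 1 (zm k)).IsMonicOfDegree k := by
  induction k using Nat.strong_induction_on with
  | _ k ih =>
    cases k with
    | zero => simp [zm]
    | succ k =>
      have h_lead := (Polynomial.isMonicOfDegree_X (MvPolynomial (Fin 1) ℂ)).mul (ih k (by omega))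
      rw [zm_succ, map_add, map_sub, map_nsmul, map_nsmul, map_mul, map_mul, finSuccEquiv_X_zero,
        finSuccEquiv_X_one, add_comm k 1]
      refine (h_lead.sub ?_).add_right ?_
      · refine (Polynomial.natDegree_smul_le _ _).trans_lt ?_
        rw [(ih (k - 1) (by omega)).natDegree_eq]
        omega
      · refine (Polynomial.natDegree_smul_le _ _).trans_lt
          ((Polynomial.natDegree_C_mul_le _ _).trans_lt ?_)
        rw [(ih (k - 2) (by omega)).natDegree_eq]
        omega

/-- The pairs `(c, k)` for which the basis vector `γ ^ c * ζ_k` has weight `c + ⌊k / 2⌋ ≥ m`. -/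
def weightSet (m : ℕ) : Set (ℕ × ℕ) := {i | m ≤ i.1 + i.2 / 2}

/-- The span of the basis vectors `γ ^ c * ζ_k` of weight `c + ⌊k / 2⌋ ≥ m`. -/
noncomputable def weightFiltration (m : ℕ) : Submodule ℂ (MvPolynomial (Fin 2) ℂ) :=
  Submodule.span ℂ (monicBasis isMonicOfDegree_finSuccEquiv_zm '' weightSet m)

lemma compl_weightSet (m : ℕ) : (weightSet m)ᶜ =
    ((Finset.range m).sigma fun c ↦ Finset.range (2 * (m - c))).map
      (Equiv.sigmaEquivProd ℕ ℕ).toEmbedding := by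
  ext ⟨c, k⟩
  simp only [weightSet, Set.mem_compl_iff, Set.mem_ofPred_eq, Finset.mem_coe, Finset.mem_map_equiv,
    Equiv.sigmaEquivProd_symm_apply, Finset.mem_sigma, Finset.mem_range]
  omega

lemma finite_compl_weightSet (m : ℕ) : (weightSet m)ᶜ.Finite := by
  rw [compl_weightSet]
  exact Finset.finite_toSet _

lemma ncard_compl_weightSet (m : ℕ) : (weightSet m)ᶜ.ncard = m * (m + 1) := by
  rw [compl_weightSet, Set.ncard_coe_finset, Finset.card_map, Finset.card_sigma]
  simp only [Finset.card_range]
  induction m with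
  | zero => rfl
  | succ m ih =>
    simp only [Finset.sum_range_succ', Nat.add_sub_add_right, Nat.sub_zero, ih]
    ring

lemma X_one_pow_mul_zm_mem_weightFiltration {m c k : ℕ} (h : m ≤ c + k / 2) :
    X 1 ^ c * zm k ∈ weightFiltration m :=
  Submodule.subset_span ⟨(c, k), h, monicBasis_apply _ _⟩

lemma weightFiltration_le {m : ℕ} {P : Submodule ℂ (MvPolynomial (Fin 2) ℂ)}
    (hP : ∀ c k, m ≤ c + k / 2 → X 1 ^ c * zm k ∈ P) : weightFiltration m ≤ P := by
  rw [weightFiltration, Submodule.span_le]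
  rintro _ ⟨⟨c, k⟩, hck, rfl⟩
  rw [monicBasis_apply]
  exact hP c k hck

lemma X_zero_mul_mem_weightFiltration {m : ℕ} {v : MvPolynomial (Fin 2) ℂ}
    (hv : v ∈ weightFiltration m) : X 0 * v ∈ weightFiltration m := by
  refine weightFiltration_le (P := (weightFiltration m).comap (LinearMap.mulLeft ℂ (X 0)))
    (fun c k hck ↦ ?_) hv
  rw [Submodule.mem_comap, LinearMap.mulLeft_apply, X_zero_mul_X_one_pow_mul_zm]
  refine sub_mem (add_mem ?_ ?_) (nsmul_mem ?_ _)
  · exact X_one_pow_mul_zm_mem_weightFiltration (by omega)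
  · rcases Nat.even_or_odd' k with ⟨i, rfl | rfl⟩
    · simp [predCoeff_of_even]
    · exact nsmul_mem (X_one_pow_mul_zm_mem_weightFiltration (by omega)) _
  · exact X_one_pow_mul_zm_mem_weightFiltration (by omega)

lemma X_one_mul_mem_weightFiltration {m : ℕ} {v : MvPolynomial (Fin 2) ℂ}
    (hv : v ∈ weightFiltration m) : X 1 * v ∈ weightFiltration m := by
  refine weightFiltration_le (P := (weightFiltration m).comap (LinearMap.mulLeft ℂ (X 1)))
    (fun c k hck ↦ ?_) hv
  rw [Submodule.mem_comap, LinearMap.mulLeft_apply, ← mul_assoc, ← pow_succ']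
  exact X_one_pow_mul_zm_mem_weightFiltration (by omega)

lemma mul_mem_weightFiltration {m : ℕ} (p : MvPolynomial (Fin 2) ℂ) {v : MvPolynomial (Fin 2) ℂ}
    (hv : v ∈ weightFiltration m) : p * v ∈ weightFiltration m :=
  mul_mem_of_forall_X_mul_mem
    (Fin.forall_fin_two.2
      ⟨fun _ ↦ X_zero_mul_mem_weightFiltration, fun _ ↦ X_one_mul_mem_weightFiltration⟩) p hv

lemma zm_mem_Jm {g k : ℕ} (h : g ≤ k) : zm k ∈ Jm g := by
  induction k using Nat.strong_induction_on with
  | _ k ih =>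
    by_cases hk : k ≤ g + 2
    · obtain rfl | rfl | rfl : k = g ∨ k = g + 1 ∨ k = g + 2 := by omega
      all_goals exact Ideal.subset_span (by simp)
    · obtain ⟨k, rfl⟩ := Nat.exists_eq_succ_of_ne_zero (by omega : k ≠ 0)
      rw [Nat.succ_eq_add_one, zm_succ]
      refine add_mem (sub_mem ?_ (nsmul_mem ?_ _)) (nsmul_mem ?_ _)
      · exact Ideal.mul_mem_left _ _ (ih k (by omega) (by omega))
      · exact ih (k - 1) (by omega) (by omega)
      · exact Ideal.mul_mem_left _ _ (ih (k - 2) (by omega) (by omega))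

lemma Jm_antitone : Antitone Jm := by
  intro g h hgh
  rw [Jm, Ideal.span_le]
  rintro _ (rfl | rfl | rfl) <;> exact zm_mem_Jm (by omega)

lemma X_one_mul_zm_mem_Jm (k : ℕ) : X 1 * zm k ∈ Jm (2 * (k / 2 + 1)) := by
  have h_coeff : (gammaCoeff (k + 2) : ℂ) ≠ 0 :=
    Nat.cast_ne_zero.2 (gammaCoeff_pos (by omega)).ne'
  have h_solve : (gammaCoeff (k + 2) : ℂ) • (X 1 * zm k) =
      zm (k + 3) - X 0 * zm (k + 2) + predCoeff (k + 2) • zm (k + 1) := by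
    rw [Nat.cast_smul_eq_nsmul, zm_succ (k + 2)]
    simp only [Nat.add_sub_cancel, Nat.add_one_sub_one]
    ring
  rw [← Submodule.restrictScalars_mem ℂ, ← Submodule.smul_mem_iff _ h_coeff, h_solve]
  refine add_mem (sub_mem (zm_mem_Jm (by omega)) ?_) ?_
  · exact Ideal.mul_mem_left _ _ (zm_mem_Jm (by omega))
  · rcases Nat.even_or_odd' k with ⟨i, rfl | rfl⟩
    · simp [predCoeff_of_even, parity_simps]
    · exact nsmul_mem (zm_mem_Jm (by omega)) _

lemma X_one_mul_mem_Jm {i : ℕ} {v : MvPolynomial (Fin 2) ℂ} (hv : v ∈ Jm (2 * i)) :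
    X 1 * v ∈ Jm (2 * (i + 1)) := by
  have h_gen {k : ℕ} (hk : 2 * i ≤ k) : X 1 * zm k ∈ Jm (2 * (i + 1)) :=
    Jm_antitone (by omega) (X_one_mul_zm_mem_Jm k)
  suffices Jm (2 * i) ≤ Submodule.comap
      (LinearMap.mulLeft (MvPolynomial (Fin 2) ℂ) (X 1)) (Jm (2 * (i + 1))) from this hv
  rw [Jm, Ideal.span, Submodule.span_le]
  rintro _ (rfl | rfl | rfl) <;> exact h_gen (by omega)

lemma X_one_pow_mul_zm_mem_Jm {m c k : ℕ} (h : m ≤ c + k / 2) :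
    X 1 ^ c * zm k ∈ Jm (2 * m) := by
  have h_weight (c : ℕ) : X 1 ^ c * zm k ∈ Jm (2 * (k / 2 + c)) := by
    induction c with
    | zero => simpa using zm_mem_Jm (by omega)
    | succ c ih => simpa only [pow_succ', mul_assoc, add_assoc] using X_one_mul_mem_Jm ih
  exact Jm_antitone (by omega) (h_weight c)

lemma restrictScalars_Jm_two_mul (m : ℕ) :
    (Jm (2 * m)).restrictScalars ℂ = weightFiltration m := by
  apply le_antisymm
  · intro v hv
    induction hv using Submodule.span_induction with
    | mem v hv =>
      obtain rfl | rfl | rfl := hv <;>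
        simpa using X_one_pow_mul_zm_mem_weightFiltration (m := m) (c := 0) (by omega)
    | zero => exact zero_mem _
    | add v w _ _ hv hw => exact add_mem hv hw
    | smul p v _ hv => exact mul_mem_weightFiltration p hv
  · exact weightFiltration_le fun c k ↦ X_one_pow_mul_zm_mem_Jm

lemma finite_quotient_restrictScalars_Jm (g : ℕ) :
    FiniteDimensional ℂ (MvPolynomial (Fin 2) ℂ ⧸ (Jm g).restrictScalars ℂ) := by
  have h_le : weightFiltration g ≤ (Jm g).restrictScalars ℂ :=
    restrictScalars_Jm_two_mul g ▸ Jm_antitone (by omega : g ≤ 2 * g)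
  have : FiniteDimensional ℂ (MvPolynomial (Fin 2) ℂ ⧸ weightFiltration g) :=
    finite_quotient_span_image _ (finite_compl_weightSet g)
  exact Module.Finite.of_surjective (Submodule.factor h_le) (Submodule.factor_surjective h_le)

lemma finrank_quotient_Jm_two_mul (m : ℕ) :
    Module.finrank ℂ (MvPolynomial (Fin 2) ℂ ⧸ Jm (2 * m)) = m * (m + 1) := by
  rw [← (Submodule.Quotient.restrictScalarsEquiv ℂ (Jm (2 * m))).finrank_eq,
    restrictScalars_Jm_two_mul, weightFiltration, finrank_quotient_span_image,
    ncard_compl_weightSet]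

section OddIndex

variable {m : ℕ} {μ : ℂ} {l : Module.Dual ℂ (MvPolynomial (Fin 2) ℂ)}

lemma isEigenRecurrence_of_eigenfunctional
    (hl_zero : ∀ v ∈ Jm (2 * (m + 1)), l v = 0)
    (hl_eigen : ∀ v ∈ Jm (2 * m), l (X 0 * v) = μ * l v) :
    IsEigenRecurrence (fun i ↦ ((4 * (2 * i + 1) : ℝ) : ℂ))
      (fun i ↦ ((gammaCoeff (2 * i + 2) : ℝ) : ℂ)) (fun i ↦ ((gammaCoeff (2 * i + 3) : ℝ) : ℂ)) m μ
      (fun i ↦ l (X 1 ^ (m - i) * zm (2 * i))) (fun i ↦ l (X 1 ^ (m - i) * zm (2 * i + 1))) := by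
  have h_even {i : ℕ} (hi : i ≤ m) : μ * l (X 1 ^ (m - i) * zm (2 * i)) =
      l (X 1 ^ (m - i) * zm (2 * i + 1)) -
        gammaCoeff (2 * i) * l (X 1 ^ (m - i + 1) * zm (2 * i - 2)) := by
    rw [← hl_eigen _ (X_one_pow_mul_zm_mem_Jm (by omega)), X_zero_mul_X_one_pow_mul_zm,
      predCoeff_of_even (even_two_mul i), zero_nsmul, add_zero, map_sub, map_nsmul, nsmul_eq_mul]
  have h_odd {i : ℕ} (hi : i ≤ m) : μ * l (X 1 ^ (m - i) * zm (2 * i + 1)) =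
      (4 * (2 * i + 1)) ^ 2 * l (X 1 ^ (m - i) * zm (2 * i)) -
        gammaCoeff (2 * i + 1) * l (X 1 ^ (m - i + 1) * zm (2 * i + 1 - 2)) := by
    rw [← hl_eigen _ (X_one_pow_mul_zm_mem_Jm (by omega)), X_zero_mul_X_one_pow_mul_zm,
      map_sub, map_add, hl_zero _ (X_one_pow_mul_zm_mem_Jm (by omega)),
      predCoeff_two_mul_add_one, zero_add, map_nsmul, map_nsmul, nsmul_eq_mul, nsmul_eq_mul]
    push_cast
    rfl
  constructor
  · simpa [gammaCoeff] using (h_even (Nat.zero_le m)).symm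
  · simpa [gammaCoeff] using h_odd (Nat.zero_le m)
  · intro i hi
    have := h_even (i := i + 1) hi
    rw [show m - (i + 1) + 1 = m - i by omega, show 2 * (i + 1) - 2 = 2 * i by omega] at this
    push_cast
    linear_combination -this
  · intro i hi
    have := h_odd (i := i + 1) hi
    rw [show m - (i + 1) + 1 = m - i by omega] at this
    push_cast at this ⊢
    exact this

lemma eigenfunctional_eq_zero
    (hl_zero : ∀ v ∈ Jm (2 * m + 1), l v = 0)
    (hl_eigen : ∀ v ∈ Jm (2 * m), l (X 0 * v) = μ * l v) :
    ∀ v ∈ Jm (2 * m), l v = 0 := by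
  have hl_zero' : ∀ v ∈ Jm (2 * (m + 1)), l v = 0 :=
    fun v hv ↦ hl_zero v (Jm_antitone (by omega) hv)
  have h_rec := isEigenRecurrence_of_eigenfunctional hl_zero' hl_eigen
  have h_last : l (X 1 ^ (m - m) * zm (2 * m + 1)) = 0 := by
    simpa using hl_zero _ (zm_mem_Jm le_rfl)
  have hx {i : ℕ} (hi : i ≤ m) : l (X 1 ^ (m - i) * zm (2 * i)) = 0 := by
    refine h_rec.x_eq_zero_of_y_last_eq_zero (fun i j hij ↦ ?_) (fun i ↦ by positivity)
      (fun i ↦ by positivity) (fun i ↦ Nat.cast_pos.2 (gammaCoeff_pos (by omega))) h_last hi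
    have : (i : ℝ) < j := Nat.cast_lt.2 hij
    linarith
  have hy {i : ℕ} (hi : i ≤ m) : l (X 1 ^ (m - i) * zm (2 * i + 1)) = 0 :=
    h_rec.y_eq_zero_of_forall_le hi fun k hk ↦ hx (hk.trans hi)
  suffices (Jm (2 * m)).restrictScalars ℂ ≤ LinearMap.ker l from this
  rw [restrictScalars_Jm_two_mul]
  refine weightFiltration_le fun c k hck ↦ ?_
  rcases hck.eq_or_lt with h_eq | h_lt
  · obtain rfl : c = m - k / 2 := by omega
    obtain ⟨i, rfl | rfl⟩ := Nat.even_or_odd' k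
    · simpa using hx (i := i) (by omega)
    · rw [show (2 * i + 1) / 2 = i by omega]
      exact hy (by omega)
  · exact hl_zero' _ (X_one_pow_mul_zm_mem_Jm h_lt)

end OddIndex

lemma Jm_two_mul_add_one (m : ℕ) : Jm (2 * m + 1) = Jm (2 * m) := by
  by_contra h_ne
  have h_lt : (Jm (2 * m + 1)).restrictScalars ℂ < (Jm (2 * m)).restrictScalars ℂ :=
    (Jm_antitone (Nat.le_succ _)).lt_of_ne h_ne
  have := finite_quotient_restrictScalars_Jm (2 * m + 1)
  obtain ⟨μ, l, hl_zero, ⟨v, hv, hlv⟩, hl_eigen⟩ :=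
    exists_eigenfunctional_of_lt h_lt (LinearMap.mulLeft ℂ (X 0))
      (fun _ ↦ Ideal.mul_mem_left _ _) (fun _ ↦ Ideal.mul_mem_left _ _)
  exact hlv (eigenfunctional_eq_zero hl_zero hl_eigen v hv)

/-- For every g ≥ 0, ℂ[α,γ]/J_g^- is finite dimensional over ℂ of dimension
    ⌊g/2⌋·(⌊g/2⌋+1). -/
theorem finrank_quotient_Jm (g : ℕ) :
    FiniteDimensional ℂ (MvPolynomial (Fin 2) ℂ ⧸ Jm g) ∧
    Module.finrank ℂ (MvPolynomial (Fin 2) ℂ ⧸ Jm g) = (g / 2) * (g / 2 + 1) := by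
  have h_finite := finite_quotient_restrictScalars_Jm g
  refine ⟨Module.Finite.equiv (Submodule.Quotient.restrictScalarsEquiv ℂ (Jm g)), ?_⟩
  obtain ⟨m, rfl | rfl⟩ := Nat.even_or_odd' g
  · rw [finrank_quotient_Jm_two_mul, Nat.mul_div_cancel_left m two_pos]
  · rw [Jm_two_mul_add_one, finrank_quotient_Jm_two_mul, show (2 * m + 1) / 2 = m by omega]
end

section
/- For g ≥ 0 even and i ≥ 0 the following hold: (i) there exists w ∈ ℂ[α,γ] which is a unit modulo J_g^+ such that w·γ^i ζ_{g−2i−1}^+ ≡ γ^{i+1} ζ_{g−2i−2}^+ (mod J_g^+); (ii) there exists x ∈ ℂ[α,γ] which is a unit modulo J_g^+ such that α·x·γ^i ζ_{g−2i−1}^+ ≡ γ^{i+1} ζ_{g−2i−3}^+ (mod J_g^+) if i is even, and x·γ^i ζ_{g−2i−1}^+ ≡ α·γ^{i+1} ζ_{g−2i−3}^+ (mod J_g^+) if i is odd. -/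
open MvPolynomial

/-- ζ_k^+ ∈ ℂ[α,γ] (variables: X 0 = α, X 1 = γ):
    ζ_{k+1}^+ = α ζ_k^+ + 16k² ζ_{k−1}^+ + 2k(k−1) γ ζ_{k−2}^+ for k even, and
    ζ_{k+1}^+ = α ζ_k^+ + 2k(k−1) γ ζ_{k−2}^+ for k odd. -/
noncomputable def zp : ℕ → MvPolynomial (Fin 2) ℂ
  | 0 => 1
  | 1 => X 0
  | 2 => X 0 * zp 1
  | (n + 3) =>
      if n % 2 = 0 then
        X 0 * zp (n + 2) + C (16 * ((n : ℂ) + 2) ^ 2) * zp (n + 1)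
          + C (2 * ((n : ℂ) + 2) * ((n : ℂ) + 1)) * X 1 * zp n
      else
        X 0 * zp (n + 2) + C (2 * ((n : ℂ) + 2) * ((n : ℂ) + 1)) * X 1 * zp n

/-- ζ_k^+ for an integer index k, with ζ_k^+ = 0 for k < 0. -/
noncomputable def zpZ (k : ℤ) : MvPolynomial (Fin 2) ℂ :=
  if k < 0 then 0 else zp k.toNat

/-- J_g^+ = (ζ_g^+, ζ_{g+1}^+, ζ_{g+2}^+) ⊆ ℂ[α,γ], for a natural number g. -/
noncomputable def Jp (g : ℕ) : Ideal (MvPolynomial (Fin 2) ℂ) :=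
  Ideal.span {zp g, zp (g + 1), zp (g + 2)}

/-!
Write `u i = γ ^ i * ζ_{g-2i-1}` and `v i = γ ^ (i+1) * ζ_{g-2i-2}`, taken modulo `J_g^+`. At every
complex point of `ℂ[α,γ]/J_g^+` the recursion forces `γ = 0`, and then `ζ_{g+1}^+` is `α` times a
product of factors `α ^ 2 + d` with `d > 0`, so `-α ^ 2` takes nonnegative real values at all
points. By the Nullstellensatz an element with positive values at all points is a unit. Since
`γ * u i = 0`, the recursion multiplied by `γ ^ (i+1)` expresses `v (i+1)` and `u (i+2)` through
`v i` and `u (i+1)`. By induction on `i`, `-v i` is a positive multiple of `u i`, and `-u (i+1)` is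
a positive multiple of `α * u i` (`i` even), resp. `α * u (i+1)` is one of `u i` (`i` odd): all the
coefficients that occur are built from positive ones and `-α ^ 2` by sums, products and inverses.
-/

theorem isUnit_of_forall_algHom_ne_zero {k K A : Type*} [Field k] [Field K] [IsAlgClosed K]
    [Algebra k K] [CommRing A] [Algebra k A] [Algebra.FiniteType k A] {a : A}
    (h : ∀ φ : A →ₐ[k] K, φ a ≠ 0) : IsUnit a := by
  by_contra ha
  obtain ⟨m, hm, ham⟩ := exists_max_ideal_of_mem_nonunits ha
  let : Field (A ⧸ m) := Ideal.Quotient.field m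
  have : Module.Finite k (A ⧸ m) := finite_of_finite_type_of_isJacobsonRing k (A ⧸ m)
  let ψ : A ⧸ m →ₐ[k] K := IsAlgClosed.lift
  refine h (ψ.comp (Ideal.Quotient.mkₐ k m)) ?_
  rw [AlgHom.comp_apply, Ideal.Quotient.mkₐ_eq_mk, Ideal.Quotient.eq_zero_iff_mem.mpr ham, map_zero]

theorem exists_isUnit_mk_mul_sub_mem {R : Type*} [CommRing R] {I : Ideal R} {a b : R}
    (h : Associated (Ideal.Quotient.mk I a) (Ideal.Quotient.mk I b)) :
    ∃ w : R, IsUnit (Ideal.Quotient.mk I w) ∧ w * a - b ∈ I := by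
  obtain ⟨u, hu⟩ := h
  obtain ⟨w, hw⟩ := Ideal.Quotient.mk_surjective (u : R ⧸ I)
  refine ⟨w, hw ▸ u.isUnit, ?_⟩
  rw [← Ideal.Quotient.eq, map_mul, hw, mul_comm, hu]

section Points

open scoped ComplexOrder

variable {A B : Type*} [CommRing A] [Algebra ℂ A] [CommRing B] [Algebra ℂ B]

/-- `a` takes a positive real value at every complex point of `Spec A`. The order on `ℂ` is the
partial one, in which `0 < z` means that `z` is real and positive. -/
def PosOnPoints (a : A) : Prop := ∀ φ : A →ₐ[ℂ] ℂ, 0 < φ a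

/-- `a` takes a nonnegative real value at every complex point of `Spec A`. -/
def NonnegOnPoints (a : A) : Prop := ∀ φ : A →ₐ[ℂ] ℂ, 0 ≤ φ a

theorem posOnPoints_algebraMap {c : ℂ} (hc : 0 < c) : PosOnPoints (algebraMap ℂ A c) :=
  fun φ ↦ by simpa only [AlgHom.commutes, Algebra.algebraMap_self, RingHom.id_apply] using hc

theorem posOnPoints_one : PosOnPoints (1 : A) :=
  fun φ ↦ by simp only [map_one, zero_lt_one]

namespace PosOnPoints

variable {a b : A}

theorem nonnegOnPoints (ha : PosOnPoints a) : NonnegOnPoints a :=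
  fun φ ↦ (ha φ).le

theorem add_nonneg (ha : PosOnPoints a) (hb : NonnegOnPoints b) : PosOnPoints (a + b) :=
  fun φ ↦ by simpa only [map_add] using add_pos_of_pos_of_nonneg (ha φ) (hb φ)

theorem mul (ha : PosOnPoints a) (hb : PosOnPoints b) : PosOnPoints (a * b) :=
  fun φ ↦ by simpa only [map_mul] using mul_pos (ha φ) (hb φ)

theorem map (ha : PosOnPoints a) (f : A →ₐ[ℂ] B) : PosOnPoints (f a) :=
  fun φ ↦ ha (φ.comp f)

theorem isUnit [Algebra.FiniteType ℂ A] (ha : PosOnPoints a) : IsUnit a :=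
  isUnit_of_forall_algHom_ne_zero fun φ ↦ (ha φ).ne'

theorem exists_mul_eq_one [Algebra.FiniteType ℂ A] (ha : PosOnPoints a) :
    ∃ b, PosOnPoints b ∧ a * b = 1 := by
  obtain ⟨b, hab⟩ := ha.isUnit.exists_right_inv
  refine ⟨b, fun φ ↦ ?_, hab⟩
  have hφ : φ a * φ b = 1 := by rw [← map_mul, hab, map_one]
  rw [eq_inv_of_mul_eq_one_right hφ]
  exact RCLike.inv_pos_of_pos (ha φ)

end PosOnPoints

theorem NonnegOnPoints.mul {a b : A} (ha : NonnegOnPoints a) (hb : NonnegOnPoints b) :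
    NonnegOnPoints (a * b) :=
  fun φ ↦ by simpa only [map_mul] using mul_nonneg (ha φ) (hb φ)

/-- `b` is a multiple of `a` by a factor that is positive on points. When `A` is of finite type over
`ℂ` this refines `Associated`, and keeps the control of signs needed to add such relations. -/
def PosAssociated (a b : A) : Prop := ∃ w, PosOnPoints w ∧ b = w * a

namespace PosAssociated

variable {a b c s : A}

theorem trans (hab : PosAssociated a b) (hbc : PosAssociated b c) : PosAssociated a c := by
  obtain ⟨w, hw, rfl⟩ := hab
  obtain ⟨x, hx, rfl⟩ := hbc
  exact ⟨x * w, hx.mul hw, (mul_assoc x w a).symm⟩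

theorem mul_left (hab : PosAssociated a b) (s : A) : PosAssociated (s * a) (s * b) := by
  obtain ⟨w, hw, rfl⟩ := hab
  exact ⟨w, hw, mul_left_comm s w a⟩

theorem neg_neg (hab : PosAssociated a b) : PosAssociated (-a) (-b) := by
  obtain ⟨w, hw, rfl⟩ := hab
  exact ⟨w, hw, neg_mul_eq_mul_neg w a⟩

theorem add_nonneg_mul (hab : PosAssociated a b) (hs : NonnegOnPoints s) :
    PosAssociated a (b + s * a) := by
  obtain ⟨w, hw, rfl⟩ := hab
  exact ⟨w + s, hw.add_nonneg hs, (add_mul w s a).symm⟩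

theorem mul_eq_zero_of_mul_eq_zero (hab : PosAssociated a b) (hs : s * a = 0) : s * b = 0 := by
  obtain ⟨w, -, rfl⟩ := hab
  rw [mul_left_comm, hs, mul_zero]

variable [Algebra.FiniteType ℂ A]

theorem symm (hab : PosAssociated a b) : PosAssociated b a := by
  obtain ⟨w, hw, rfl⟩ := hab
  obtain ⟨x, hx, hwx⟩ := hw.exists_mul_eq_one
  exact ⟨x, hx, by linear_combination -a * hwx⟩

theorem of_pos_mul_right (hc : PosOnPoints c) (hab : PosAssociated a (c * b)) :
    PosAssociated a b :=
  hab.trans (symm ⟨c, hc, rfl⟩)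

theorem associated (hab : PosAssociated a b) : Associated a b := by
  obtain ⟨w, hw, rfl⟩ := hab
  exact associated_unit_mul_right a w hw.isUnit

end PosAssociated

section Step

variable [Algebra.FiniteType ℂ A] {α c d e u v u' v' u'' : A}

theorem posAssociated_neg_and_mul_of_even_step (hα : NonnegOnPoints (-α ^ 2))
    (hc : PosOnPoints c) (hd : PosOnPoints d) (he : PosOnPoints e)
    (hu'' : c * u'' = v - α * u') (hv' : e * v' = -(α * v) - d * u')
    (huv : PosAssociated u (-v)) (huu' : PosAssociated (α * u) (-u')) :
    PosAssociated u' (-v') ∧ PosAssociated u' (α * u'') := by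
  have hu'v : PosAssociated u' (α * v) := by
    simpa only [neg_neg, mul_neg] using (huu'.symm.trans (huv.mul_left α)).neg_neg
  constructor
  · refine .of_pos_mul_right he ?_
    convert hu'v.add_nonneg_mul hd.nonnegOnPoints using 1
    linear_combination -hv'
  · refine .of_pos_mul_right hc ?_
    convert hu'v.add_nonneg_mul hα using 1
    linear_combination α * hu''

theorem posAssociated_neg_and_mul_neg_of_odd_step (hα : NonnegOnPoints (-α ^ 2))
    (hc : PosOnPoints c) (hd : PosOnPoints d) (he : PosOnPoints e)
    (hu'' : c * u'' = v - α * u') (hv' : e * v' = -(α * v) - d * u')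
    (huv : PosAssociated u (-v)) (huu' : PosAssociated u (α * u')) :
    PosAssociated u' (-v') ∧ PosAssociated (α * u') (-u'') := by
  have hu'v : PosAssociated (α * u') (-v) := huu'.symm.trans huv
  constructor
  · obtain ⟨w, hw, hvw⟩ := hu'v
    have hdu' : PosAssociated u' (d * u') := ⟨d, hd, rfl⟩
    refine .of_pos_mul_right he ?_
    convert hdu'.add_nonneg_mul (hw.nonnegOnPoints.mul hα) using 1
    linear_combination -hv' - α * hvw
  · refine .of_pos_mul_right hc ?_
    convert hu'v.add_nonneg_mul posOnPoints_one.nonnegOnPoints using 1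
    linear_combination -hu''

end Step

/-- The recursion of `ζ^+`, with coefficients that are only required to be positive on points.
The index is the `k` of `ζ_{k+1}^+ = α ζ_k^+ + ⋯`. -/
structure PosRecurrence (α γ : A) (z : ℤ → A) : Prop where
  odd : ∀ k, Odd k → 0 < k → ∃ c, PosOnPoints c ∧ z (k + 1) = α * z k + c * γ * z (k - 2)
  even : ∀ k, Even k → 0 < k → ∃ c d, PosOnPoints c ∧ PosOnPoints d ∧
    z (k + 1) = α * z k + d * z (k - 1) + c * γ * z (k - 2)

/-- The sequence `γ ^ i * ζ_{g-2i-1}`; for even `g` it involves the `ζ` of odd index. -/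
def oddTerm (γ : A) (z : ℤ → A) (g : ℤ) (i : ℕ) : A := γ ^ i * z (g - 2 * i - 1)

/-- The sequence `γ ^ (i+1) * ζ_{g-2i-2}`; for even `g` it involves the `ζ` of even index. -/
def evenTerm (γ : A) (z : ℤ → A) (g : ℤ) (i : ℕ) : A := γ ^ (i + 1) * z (g - 2 * i - 2)

namespace PosRecurrence

variable {α γ : A} {z : ℤ → A}

theorem map (h : PosRecurrence α γ z) (f : A →ₐ[ℂ] B) :
    PosRecurrence (f α) (f γ) (fun k ↦ f (z k)) where
  odd k hk hk0 := by
    obtain ⟨c, hc, hz⟩ := h.odd k hk hk0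
    exact ⟨f c, hc.map f, by simp only [hz, map_add, map_mul]⟩
  even k hk hk0 := by
    obtain ⟨c, d, hc, hd, hz⟩ := h.even k hk hk0
    exact ⟨f c, f d, hc.map f, hd.map f, by simp only [hz, map_add, map_mul]⟩

theorem exists_eq_add (h : PosRecurrence α γ z) {k : ℤ} (hk : 0 < k) :
    ∃ c d, PosOnPoints c ∧ z (k + 1) = α * z k + d * z (k - 1) + c * γ * z (k - 2) := by
  rcases Int.even_or_odd k with hk' | hk'
  · obtain ⟨c, d, hc, -, hz⟩ := h.even k hk' hk
    exact ⟨c, d, hc, hz⟩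
  · obtain ⟨c, hc, hz⟩ := h.odd k hk' hk
    exact ⟨c, 0, hc, by rw [hz, zero_mul, add_zero]⟩

theorem eq_zero_of_consecutive_zeros [IsDomain A] [Algebra.FiniteType ℂ A]
    (h : PosRecurrence α γ z) (h0 : z 0 ≠ 0) {g : ℕ}
    (hg : z g = 0) (hg1 : z (g + 1) = 0) (hg2 : z (g + 2) = 0) : γ = 0 := by
  induction g with
  | zero => exact absurd hg h0
  | succ g ih =>
    push_cast at hg hg1 hg2
    obtain ⟨c, d, hc, hz⟩ := h.exists_eq_add (k := g + 2) (by lia)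
    have hprod : c * γ * z g = 0 := by
      ring_nf at hg hg1 hg2 hz ⊢
      linear_combination hg2 - hz - α * hg1 - d * hg
    rcases mul_eq_zero.mp hprod with hcγ | hg0
    · exact (mul_eq_zero.mp hcγ).resolve_left hc.isUnit.ne_zero
    · exact ih hg0 hg (by convert hg1 using 2; ring)

theorem neg_sq_nonneg_of_eq_zero {α : ℂ} {z : ℤ → ℂ} (h : PosRecurrence α 0 z) (h1 : z 1 = α)
    {n : ℕ} (hn : z (2 * n + 1) = 0) : 0 ≤ -α ^ 2 := by
  induction n with
  | zero =>
    have hα : α = 0 := by simpa only [Nat.cast_zero, mul_zero, zero_add, h1] using hn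
    simp [hα]
  | succ n ih =>
    obtain ⟨c, -, hodd⟩ := h.odd (2 * n + 1) (by simp) (by lia)
    obtain ⟨c', d, -, hd, heven⟩ := h.even (2 * n + 2) (by grind) (by lia)
    have hprod : (α ^ 2 + d) * z (2 * n + 1) = 0 := by
      push_cast at hn
      ring_nf at hn hodd heven ⊢
      linear_combination hn - heven - α * hodd
    rcases mul_eq_zero.mp hprod with hd' | hz
    · rw [show -α ^ 2 = d by linear_combination -hd']
      exact (hd (AlgHom.id ℂ ℂ)).le
    · exact ih hz

theorem nonnegOnPoints_neg_sq (h : PosRecurrence α γ z) (h0 : z 0 = 1) (h1 : z 1 = α) {g : ℕ}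
    (heven : Even g) (hg : z g = 0) (hg1 : z (g + 1) = 0) (hg2 : z (g + 2) = 0) :
    NonnegOnPoints (-α ^ 2) := by
  intro φ
  have hφ := h.map φ
  have hγ : φ γ = 0 := hφ.eq_zero_of_consecutive_zeros (g := g)
    (by simp only [h0, map_one, ne_eq, one_ne_zero, not_false_eq_true])
    (by simp only [hg, map_zero]) (by simp only [hg1, map_zero]) (by simp only [hg2, map_zero])
  rw [hγ] at hφ
  obtain ⟨n, rfl⟩ := heven.two_dvd
  push_cast at hg1
  simpa only [map_neg, map_pow] using
    hφ.neg_sq_nonneg_of_eq_zero (n := n) (by simp only [h1]) (by simp only [hg1, map_zero])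

variable {g : ℤ}

theorem exists_mul_oddTerm_add_two (h : PosRecurrence α γ z) (hg : Even g) {i : ℕ}
    (hi : 2 * i + 4 ≤ g) : ∃ c, PosOnPoints c ∧
      c * oddTerm γ z g (i + 2) = evenTerm γ z g i - α * oddTerm γ z g (i + 1) := by
  obtain ⟨c, hc, hz⟩ := h.odd (g - 2 * i - 3) (by grind) (by lia)
  refine ⟨c, hc, ?_⟩
  simp only [oddTerm, evenTerm]
  push_cast
  ring_nf at hz ⊢
  linear_combination -γ ^ (i + 1) * hz

theorem exists_mul_evenTerm_add_one (h : PosRecurrence α γ z) (hg : Even g) {i : ℕ}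
    (hi : 2 * i + 4 ≤ g) : ∃ c d, PosOnPoints c ∧ PosOnPoints d ∧
      c * evenTerm γ z g (i + 1) =
        γ * oddTerm γ z g i - α * evenTerm γ z g i - d * oddTerm γ z g (i + 1) := by
  obtain ⟨c, d, hc, hd, hz⟩ := h.even (g - 2 * i - 2) (by grind) (by lia)
  refine ⟨c, d, hc, hd, ?_⟩
  simp only [oddTerm, evenTerm]
  push_cast
  ring_nf at hz ⊢
  linear_combination -γ ^ (i + 1) * hz

variable [Algebra.FiniteType ℂ A]

theorem mul_oddTerm_zero_eq_zero (h : PosRecurrence α γ z) (hg : Even g) (hg0 : 0 ≤ g)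
    (hz1 : z (g + 1) = 0) (hz2 : z (g + 2) = 0) : γ * oddTerm γ z g 0 = 0 := by
  obtain ⟨c, hc, hz⟩ := h.odd (g + 1) hg.add_one (by lia)
  rw [← hc.isUnit.mul_right_eq_zero, oddTerm]
  push_cast
  ring_nf at hz hz1 hz2 ⊢
  linear_combination hz2 - hz - α * hz1

theorem posAssociated_mul_oddTerm_zero (h : PosRecurrence α γ z) (hg : Even g) (hg0 : 0 < g)
    (hz0 : z g = 0) : PosAssociated (α * oddTerm γ z g 0) (-oddTerm γ z g 1) := by
  obtain ⟨c, hc, hz⟩ := h.odd (g - 1) (hg.sub_odd odd_one) (by grind)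
  refine .of_pos_mul_right hc ⟨1, posOnPoints_one, ?_⟩
  simp only [oddTerm]
  push_cast
  ring_nf at hz ⊢
  linear_combination hz - hz0

theorem posAssociated_oddTerm_zero (h : PosRecurrence α γ z) (hg : Even g) (hg0 : 0 < g)
    (hz0 : z g = 0) (hz1 : z (g + 1) = 0) :
    PosAssociated (oddTerm γ z g 0) (-evenTerm γ z g 0) := by
  obtain ⟨c, d, hc, hd, hz⟩ := h.even g hg hg0
  refine .of_pos_mul_right hc ⟨d, hd, ?_⟩
  simp only [oddTerm, evenTerm]
  push_cast
  ring_nf at hz hz1 ⊢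
  linear_combination hz - hz1 + α * hz0

theorem posAssociated_terms (h : PosRecurrence α γ z) (hα : NonnegOnPoints (-α ^ 2))
    (hg : Even g) (hz0 : z g = 0) (hz1 : z (g + 1) = 0) (hz2 : z (g + 2) = 0) {i : ℕ}
    (hi : 2 * i + 2 ≤ g) :
    (γ * oddTerm γ z g i = 0 ∧ γ * oddTerm γ z g (i + 1) = 0) ∧
    PosAssociated (oddTerm γ z g i) (-evenTerm γ z g i) ∧
    (Even i → PosAssociated (α * oddTerm γ z g i) (-oddTerm γ z g (i + 1))) ∧
    (Odd i → PosAssociated (oddTerm γ z g i) (α * oddTerm γ z g (i + 1))) := by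
  induction i with
  | zero =>
    have hγ := h.mul_oddTerm_zero_eq_zero hg (by lia) hz1 hz2
    have hodd := h.posAssociated_mul_oddTerm_zero hg (by lia) hz0
    have hγ1 : γ * -oddTerm γ z g 1 = 0 :=
      hodd.mul_eq_zero_of_mul_eq_zero (by rw [mul_left_comm, hγ, mul_zero])
    exact ⟨⟨hγ, by simpa only [mul_neg, neg_eq_zero] using hγ1⟩,
      h.posAssociated_oddTerm_zero hg (by lia) hz0 hz1, fun _ ↦ hodd, by simp⟩
  | succ i ih =>
    push_cast at hi
    obtain ⟨⟨hγ, hγ1⟩, huv, hEven, hOdd⟩ := ih (by lia)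
    obtain ⟨c, hc, hu⟩ := h.exists_mul_oddTerm_add_two hg (i := i) (by lia)
    obtain ⟨e, d, he, hd, hv⟩ := h.exists_mul_evenTerm_add_one hg (i := i) (by lia)
    rw [hγ, zero_sub] at hv
    have hγv := huv.mul_eq_zero_of_mul_eq_zero hγ
    have hγ2 : γ * oddTerm γ z g (i + 2) = 0 := by
      rw [← hc.isUnit.mul_right_eq_zero]
      linear_combination γ * hu - hγv - α * hγ1
    refine ⟨⟨hγ1, hγ2⟩, ?_⟩
    rcases Nat.even_or_odd i with hi | hi
    · obtain ⟨hv', hu''⟩ := posAssociated_neg_and_mul_of_even_step hα hc hd he hu hv huv (hEven hi)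
      exact ⟨hv', fun hi' ↦ absurd hi (by simpa [Nat.even_add_one] using hi'), fun _ ↦ hu''⟩
    · obtain ⟨hv', hu''⟩ :=
        posAssociated_neg_and_mul_neg_of_odd_step hα hc hd he hu hv huv (hOdd hi)
      exact ⟨hv', fun _ ↦ hu'', fun hi' ↦ absurd hi (by simpa [Nat.odd_add_one] using hi')⟩

theorem associated_terms (h : PosRecurrence α γ z) (h0 : z 0 = 1) (h1 : z 1 = α)
    {g : ℕ} (hg : Even g) (hz0 : z g = 0) (hz1 : z (g + 1) = 0) (hz2 : z (g + 2) = 0) {i : ℕ}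
    (hi : 2 * i + 2 ≤ g) :
    Associated (oddTerm γ z g i) (evenTerm γ z g i) ∧
    (Even i → Associated (α * oddTerm γ z g i) (oddTerm γ z g (i + 1))) ∧
    (Odd i → Associated (oddTerm γ z g i) (α * oddTerm γ z g (i + 1))) := by
  have hα := h.nonnegOnPoints_neg_sq h0 h1 hg hz0 hz1 hz2
  obtain ⟨-, huv, hEven, hOdd⟩ :=
    h.posAssociated_terms hα (by exact_mod_cast hg) hz0 hz1 hz2 (i := i) (by lia)
  exact ⟨Associated.neg_right_iff.mp huv.associated,
    fun hi ↦ Associated.neg_right_iff.mp (hEven hi).associated, fun hi ↦ (hOdd hi).associated⟩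

end PosRecurrence

theorem zpZ_natCast (n : ℕ) : zpZ n = zp n := by
  simp [zpZ]

theorem zpZ_of_neg {k : ℤ} (hk : k < 0) : zpZ k = 0 :=
  if_pos hk

theorem zp_add_three_of_even {n : ℕ} (hn : Even n) :
    zp (n + 3) = X 0 * zp (n + 2) + C (16 * ((n : ℂ) + 2) ^ 2) * zp (n + 1)
      + C (2 * ((n : ℂ) + 2) * ((n : ℂ) + 1)) * X 1 * zp n := by
  rw [zp, if_pos (Nat.even_iff.mp hn)]

theorem zp_add_three_of_odd {n : ℕ} (hn : Odd n) :
    zp (n + 3) = X 0 * zp (n + 2) + C (2 * ((n : ℂ) + 2) * ((n : ℂ) + 1)) * X 1 * zp n := by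
  rw [zp, if_neg (Nat.not_even_iff_odd.mpr hn ∘ Nat.even_iff.mpr)]

theorem posRecurrence_zpZ : PosRecurrence (X 0) (X 1) zpZ where
  odd k hk hk0 := by
    obtain rfl | hk2 : k = 1 ∨ 2 ≤ k := by lia
    -- Here `ζ_{-1}^+ = 0`, so any positive coefficient may replace `2k(k-1) = 0`.
    · refine ⟨1, posOnPoints_one, ?_⟩
      rw [zpZ_of_neg (k := 1 - 2) (by norm_num), mul_zero, add_zero]
      exact (zpZ_natCast 2).trans (congrArg (X 0 * ·) (zpZ_natCast 1).symm)
    · obtain ⟨n, rfl⟩ : ∃ n : ℕ, k = n + 2 := ⟨(k - 2).toNat, by lia⟩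
      refine ⟨C (2 * ((n : ℂ) + 2) * ((n : ℂ) + 1)), posOnPoints_algebraMap (by positivity), ?_⟩
      have hz := zp_add_three_of_odd (n := n) (by grind)
      simp only [← zpZ_natCast] at hz
      convert hz using 3 <;> grind
  even k hk hk0 := by
    obtain ⟨n, rfl⟩ : ∃ n : ℕ, k = n + 2 := ⟨(k - 2).toNat, by grind⟩
    refine ⟨C (2 * ((n : ℂ) + 2) * ((n : ℂ) + 1)), C (16 * ((n : ℂ) + 2) ^ 2),
      posOnPoints_algebraMap (by positivity), posOnPoints_algebraMap (by positivity), ?_⟩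
    have hz := zp_add_three_of_even (n := n) (by grind)
    simp only [← zpZ_natCast] at hz
    convert hz using 3 <;> grind

end Points

theorem associated_mk_Jp {g : ℕ} (hg : Even g) {i : ℕ} (hi : 2 * i + 2 ≤ g) :
    Associated (Ideal.Quotient.mk (Jp g) (X 1 ^ i * zpZ (g - 2 * i - 1)))
      (Ideal.Quotient.mk (Jp g) (X 1 ^ (i + 1) * zpZ (g - 2 * i - 2))) ∧
    (Even i → Associated (Ideal.Quotient.mk (Jp g) (X 0 * (X 1 ^ i * zpZ (g - 2 * i - 1))))
      (Ideal.Quotient.mk (Jp g) (X 1 ^ (i + 1) * zpZ (g - 2 * i - 3)))) ∧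
    (Odd i → Associated (Ideal.Quotient.mk (Jp g) (X 1 ^ i * zpZ (g - 2 * i - 1)))
      (Ideal.Quotient.mk (Jp g) (X 0 * (X 1 ^ (i + 1) * zpZ (g - 2 * i - 3))))) := by
  have hmem {n : ℕ} (hn : zp n ∈ ({zp g, zp (g + 1), zp (g + 2)} : Set _)) :
      Ideal.Quotient.mkₐ ℂ (Jp g) (zpZ n) = 0 := by
    rw [zpZ_natCast]
    exact Ideal.Quotient.eq_zero_iff_mem.mpr (Ideal.subset_span hn)
  have hidx : (g : ℤ) - 2 * (i + 1 : ℕ) - 1 = g - 2 * i - 3 := by lia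
  have key := (posRecurrence_zpZ.map (Ideal.Quotient.mkₐ ℂ (Jp g))).associated_terms
    (by simp [zpZ, zp]) (by simp [zpZ, zp]) hg (hmem (by simp))
    (by exact_mod_cast hmem (n := g + 1) (by simp))
    (by exact_mod_cast hmem (n := g + 2) (by simp)) hi
  simpa only [oddTerm, evenTerm, hidx, Ideal.Quotient.mkₐ_eq_mk, map_mul, map_pow] using key

/-- For g ≥ 0 even and i ≥ 0:
    (i) there is a unit w mod J_g^+ with w·γ^i ζ_{g−2i−1}^+ ≡ γ^{i+1} ζ_{g−2i−2}^+ (mod J_g^+);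
    (ii) there is a unit x mod J_g^+ with
         α·x·γ^i ζ_{g−2i−1}^+ ≡ γ^{i+1} ζ_{g−2i−3}^+ (mod J_g^+) if i is even, and
         x·γ^i ζ_{g−2i−1}^+ ≡ α·γ^{i+1} ζ_{g−2i−3}^+ (mod J_g^+) if i is odd. -/
theorem Jp_even_units (g : ℕ) (heven : Even g) (i : ℕ) :
    (∃ w : MvPolynomial (Fin 2) ℂ, IsUnit (Ideal.Quotient.mk (Jp g) w) ∧
      w * (X 1 : MvPolynomial (Fin 2) ℂ) ^ i * zpZ ((g : ℤ) - 2 * i - 1)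
        - (X 1 : MvPolynomial (Fin 2) ℂ) ^ (i + 1) * zpZ ((g : ℤ) - 2 * i - 2) ∈ Jp g) ∧
    (∃ x : MvPolynomial (Fin 2) ℂ, IsUnit (Ideal.Quotient.mk (Jp g) x) ∧
      ((Even i →
        (X 0 : MvPolynomial (Fin 2) ℂ) * x * (X 1 : MvPolynomial (Fin 2) ℂ) ^ i
            * zpZ ((g : ℤ) - 2 * i - 1)
          - (X 1 : MvPolynomial (Fin 2) ℂ) ^ (i + 1) * zpZ ((g : ℤ) - 2 * i - 3) ∈ Jp g) ∧
      (Odd i →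
        x * (X 1 : MvPolynomial (Fin 2) ℂ) ^ i * zpZ ((g : ℤ) - 2 * i - 1)
          - (X 0 : MvPolynomial (Fin 2) ℂ) * (X 1 : MvPolynomial (Fin 2) ℂ) ^ (i + 1)
            * zpZ ((g : ℤ) - 2 * i - 3) ∈ Jp g))) := by
  by_cases hi : 2 * i + 2 ≤ g
  · obtain ⟨hw, hEven, hOdd⟩ := associated_mk_Jp heven hi
    obtain ⟨w, hwu, hw⟩ := exists_isUnit_mk_mul_sub_mem hw
    refine ⟨⟨w, hwu, by rwa [mul_assoc]⟩, ?_⟩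
    rcases Nat.even_or_odd i with hi | hi
    · obtain ⟨x, hxu, hx⟩ := exists_isUnit_mk_mul_sub_mem (hEven hi)
      refine ⟨x, hxu, fun _ ↦ ?_, fun hi' ↦ absurd hi (Nat.not_even_iff_odd.mpr hi')⟩
      rwa [mul_comm (X 0) x, mul_assoc, mul_assoc]
    · obtain ⟨x, hxu, hx⟩ := exists_isUnit_mk_mul_sub_mem (hOdd hi)
      refine ⟨x, hxu, fun hi' ↦ absurd hi (Nat.not_odd_iff_even.mpr hi'), fun _ ↦ ?_⟩
      rwa [mul_assoc x, mul_assoc (X 0)]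
  · have hneg (m : ℤ) (hm : 1 ≤ m) : zpZ ((g : ℤ) - 2 * i - m) = 0 := zpZ_of_neg (by grind)
    rw [hneg 1 le_rfl, hneg 2 (by norm_num), hneg 3 (by norm_num)]
    exact ⟨⟨1, by simp, by simp⟩, ⟨1, by simp, by simp, by simp⟩⟩
end
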